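/- arXiv:2404.09720 — 2 statements merged into one kernel-verified Lean document; each statement's English description precedes it below -/
import Mathlib

section
/- For every integer k ≥ 3 there exist a real β > 0 and a positive integer s₀ such that the following holds. Let n, s be integers with s > s₀ and ks + k ≤ n ≤ (1+β)ks + k − 2. If F ⊆ binom([n],k) is a non-trivial k-graph with ν(F) ≤ s, then |F| ≤ max{|E₀(n,k,s)|, |E₁(n,k,s)|}. -/
/-- The `(x,y)`-shift of a single edge `A` with respect to the family `F`. -/
def shiftEdge (x y : ℕ) (F : Finset (Finset ℕ)) (A : Finset ℕ) : Finset ℕ :=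
  if y ∈ A ∧ x ∉ A ∧ insert x (A.erase y) ∉ F then insert x (A.erase y) else A

/-- The `(x,y)`-shift of a family `F`. -/
def shiftFam (x y : ℕ) (F : Finset (Finset ℕ)) : Finset (Finset ℕ) :=
  F.image (shiftEdge x y F)

/-- The matching number: the largest size of a pairwise-disjoint subfamily. -/
noncomputable def matchingNumber (F : Finset (Finset ℕ)) : ℕ :=
  sSup {m | ∃ M ⊆ F, M.card = m ∧ (M : Set (Finset ℕ)).PairwiseDisjoint id}

/-- `F` is non-trivial on `[n]`: no vertex of `[n] = {1,…,n}` is isolated. -/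
def NonTrivial (n : ℕ) (F : Finset (Finset ℕ)) : Prop :=
  ∀ v ∈ Finset.Icc 1 n, ∃ A ∈ F, v ∈ A

/-- `F` is shifted on `Y`: all `(x,y)`-shifts with `x < y` in `Y` fix `F`. -/
def ShiftedOn (Y : Finset ℕ) (F : Finset (Finset ℕ)) : Prop :=
  ∀ x ∈ Y, ∀ y ∈ Y, x < y → shiftFam x y F = F

/-- The clique number of the `k`-graph `F` on `[n]`. -/
noncomputable def cliqueNum (n k : ℕ) (F : Finset (Finset ℕ)) : ℕ :=
  sSup {m | ∃ U ⊆ Finset.Icc 1 n, U.card = m ∧ Finset.powersetCard k U ⊆ F}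

/-- The vertex-cover number of the `k`-graph `F` on `[n]`. -/
noncomputable def coverNum (n : ℕ) (F : Finset (Finset ℕ)) : ℕ :=
  sInf {t | ∃ T ⊆ Finset.Icc 1 n, T.card = t ∧ ∀ A ∈ F, (A ∩ T).Nonempty}

/-- The link `N_F(x)`. -/
def nbr (F : Finset (Finset ℕ)) (x : ℕ) : Finset (Finset ℕ) :=
  (F.filter fun A => x ∈ A).image fun A => A.erase x

/-- The link `N_F(x,y)`. -/
def nbr2 (F : Finset (Finset ℕ)) (x y : ℕ) : Finset (Finset ℕ) :=
  (F.filter fun A => x ∈ A ∧ y ∈ A).image fun A => (A.erase x).erase y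

/-- The link `N_F(x, ȳ)`. -/
def nbrBar (F : Finset (Finset ℕ)) (x y : ℕ) : Finset (Finset ℕ) :=
  (F.filter fun A => x ∈ A ∧ y ∉ A).image fun A => A.erase x

/-- The extremal family `E₀(n,k,s)`. -/
def E0 (n k s : ℕ) : Finset (Finset ℕ) :=
  Finset.powersetCard k (Finset.Icc 1 (k * s + k - 2)) ∪
  ((Finset.powersetCard k (Finset.Icc 1 n)).filter
    (fun A => A \ Finset.Icc 1 (k * s + k - 2) = {k * s + k - 1} ∧
      (A ∩ Finset.Icc 1 (k - 1)).Nonempty)) ∪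
  ((Finset.Icc (k * s + k) n).image (fun x => insert x (Finset.Icc 1 (k - 1))))

open Classical in
/-- The extremal family `E₁(n,k,s)`. -/
noncomputable def E1 (n k s : ℕ) : Finset (Finset ℕ) :=
  Finset.powersetCard k (Finset.Icc 1 (k * s + k - 2)) ∪
  ((Finset.powersetCard k (Finset.Icc 1 n)).filter
    (fun A => 1 ∈ A ∧ ∃ x ∈ Finset.Icc (k * s + k - 1) n,
      A \ Finset.Icc 1 (k * s + k - 2) = {x}))

/-- `F` is `s`-saturated on `[n]`. -/
def Saturated (n k s : ℕ) (F : Finset (Finset ℕ)) : Prop :=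
  matchingNumber F ≤ s ∧
  ∀ G ∈ Finset.powersetCard k (Finset.Icc 1 n), G ∉ F →
    matchingNumber (insert G F) = s + 1



namespace EM
open Finset

lemma choose_up (M p j : ℕ) : (M+j).choose (p+1) ≤ M.choose (p+1) + j * (M+j)^p := by
  induction j with
  | zero => simp
  | succ j ih =>
    have h1 : (M+(j+1)).choose (p+1) = (M+j).choose p + (M+j).choose (p+1) :=
      Nat.choose_succ_succ _ _
    have h2 : (M+j).choose p ≤ (M+j)^p := Nat.choose_le_pow _ _
    have h3 : (M+j)^p ≤ (M+(j+1))^p := Nat.pow_le_pow_left (by omega) _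
    have h4 := Nat.mul_le_mul_left j h3
    rw [h1, Nat.succ_mul]; omega

lemma choose_lo (M p j : ℕ) : M.choose (p+1) + j * M.choose p ≤ (M+j).choose (p+1) := by
  induction j with
  | zero => simp
  | succ j ih =>
    have h1 : (M+(j+1)).choose (p+1) = (M+j).choose p + (M+j).choose (p+1) :=
      Nat.choose_succ_succ _ _
    have h2 : M.choose p ≤ (M+j).choose p := Nat.choose_le_choose _ (by omega)
    rw [h1, Nat.succ_mul]; omega

lemma pair_card (V : Finset ℕ) (p x y : ℕ) (hxy : x ≠ y) :
    #((V.powersetCard (p+2)).filter (fun A => x ∈ A ∧ y ∈ A)) ≤ (#V)^p := by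
  calc _ ≤ #(V.powersetCard p) := by
        apply card_le_card_of_injOn (fun A => (A.erase x).erase y)
        · intro A hA
          simp only [mem_coe, mem_filter, mem_powersetCard] at hA
          obtain ⟨⟨h1, h2⟩, h3, h4⟩ := hA
          simp only [mem_coe, mem_powersetCard]
          refine ⟨((erase_subset _ _).trans (erase_subset _ _)).trans h1, ?_⟩
          rw [card_erase_of_mem (by simp [h4, hxy.symm]), card_erase_of_mem h3]; omega
        · intro A hA B hB h
          simp only [mem_coe, mem_filter, mem_powersetCard] at hA hB
          ext z
          have := congrArg (fun s => z ∈ s) h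
          simp only [mem_erase, eq_iff_iff] at this
          by_cases hx : z = x
          · subst hx; simp [hA.2.1, hB.2.1]
          · by_cases hy : z = y
            · subst hy; simp [hA.2.2, hB.2.2]
            · simpa [hx, hy] using this
    _ ≤ _ := by rw [card_powersetCard]; exact Nat.choose_le_pow _ _

lemma star_meets (V : Finset ℕ) (F : Finset (Finset ℕ)) (p x : ℕ) (D : Finset ℕ)
    (hF : F ⊆ V.powersetCard (p+2)) (hx : x ∉ D) :
    #(F.filter (fun A => x ∈ A ∧ ¬ Disjoint A D)) ≤ #D * (#V)^p := by
  calc _ ≤ #(D.biUnion fun y => (V.powersetCard (p+2)).filter (fun A => x ∈ A ∧ y ∈ A)) := by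
        apply card_le_card
        intro A hA
        rw [mem_filter, not_disjoint_iff] at hA
        obtain ⟨h1, h2, y, h3, h4⟩ := hA
        rw [mem_biUnion]
        exact ⟨y, h4, mem_filter.2 ⟨hF h1, h2, h3⟩⟩
    _ ≤ _ := by
        apply card_biUnion_le_card_mul
        intro y hy
        exact pair_card V p x y (fun h => hx (h ▸ hy))

lemma star_card (V : Finset ℕ) (p x : ℕ) (hx : x ∈ V) :
    #((V.powersetCard (p+1)).filter (fun A => x ∈ A)) = (#V - 1).choose p := by
  rw [← card_erase_of_mem hx, ← card_powersetCard]
  symm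
  apply card_bij (fun A _ => insert x A)
  · intro A hA
    rw [mem_powersetCard] at hA
    have hxA : x ∉ A := fun h => by simpa using hA.1 h
    rw [mem_filter, mem_powersetCard]
    refine ⟨⟨insert_subset hx (hA.1.trans (erase_subset _ _)), ?_⟩, mem_insert_self _ _⟩
    rw [card_insert_of_notMem hxA, hA.2]
  · intro A hA B hB h
    rw [mem_powersetCard] at hA hB
    have hxA : x ∉ A := fun h => by simpa using hA.1 h
    have hxB : x ∉ B := fun h => by simpa using hB.1 h
    rw [← erase_insert hxA, ← erase_insert hxB, h]
  · intro A hA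
    rw [mem_filter, mem_powersetCard] at hA
    refine ⟨A.erase x, ?_, insert_erase hA.2⟩
    rw [mem_powersetCard, card_erase_of_mem hA.2]
    exact ⟨erase_subset_erase _ hA.1.1, by omega⟩

lemma star_le (V : Finset ℕ) (p x : ℕ) (hx : x ∈ V) (A : Finset (Finset ℕ))
    (hA : A ⊆ V.powersetCard (p+1)) (h : ∀ a ∈ A, x ∈ a) : #A ≤ (#V - 1).choose p := by
  rw [← star_card V p x hx]
  exact card_le_card fun a ha => mem_filter.2 ⟨hA ha, h a ha⟩

lemma meets_card (V b : Finset ℕ) (r : ℕ) (hb : b ⊆ V) :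
    #((V.powersetCard r).filter (fun A => ¬ Disjoint A b)) + (#V - #b).choose r
      = (#V).choose r := by
  rw [← card_sdiff_of_subset hb, ← card_powersetCard, ← card_powersetCard,
    ← card_filter_add_card_filter_not (s := V.powersetCard r) (fun A => ¬ Disjoint A b)]
  congr 2
  ext A
  simp only [mem_powersetCard, mem_filter, not_not, subset_sdiff]
  tauto

lemma hits_le (V b : Finset ℕ) (p : ℕ) (hb : b ⊆ V) (A : Finset (Finset ℕ))
    (hA : A ⊆ V.powersetCard (p+1)) (h : ∀ a ∈ A, ¬ Disjoint a b) :
    #A ≤ #b * (#V - 1).choose p := by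
  calc #A ≤ #(b.biUnion fun y => A.filter (fun a => y ∈ a)) := by
        apply card_le_card
        intro a ha
        obtain ⟨y, h1, h2⟩ := not_disjoint_iff.1 (h a ha)
        exact mem_biUnion.2 ⟨y, h2, mem_filter.2 ⟨ha, h1⟩⟩
    _ ≤ _ := by
        apply card_biUnion_le_card_mul
        intro y hy
        exact star_le V p y (hb hy) _ ((filter_subset _ _).trans hA) (by simp)

theorem cross2 (j c : ℕ) (V : Finset ℕ) (A B : Finset (Finset ℕ))
    (hA : A ⊆ V.powersetCard (j+2)) (hB : B ⊆ V.powersetCard (j+2))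
    (hBn : B.Nonempty) (hcr : ∀ a ∈ A, ∀ b ∈ B, ¬ Disjoint a b) (hle : #B ≤ #A)
    (hN : j + 2 ≤ #V)
    (hlarge : 3 * (j+2)^2 * (#V)^j ≤ (#V - 1).choose (j+1)) :
    #A + c * #B ≤ max ((#V).choose (j+2) - (#V - (j+2)).choose (j+2) + c)
      ((1+c) * (#V - 1).choose (j+1)) := by
  obtain ⟨b1, hb1⟩ := hBn
  have cB : ∀ b ∈ B, b ⊆ V ∧ #b = j+2 := fun b hb => mem_powersetCard.1 (hB hb)
  have cA : ∀ b ∈ A, b ⊆ V ∧ #b = j+2 := fun b hb => mem_powersetCard.1 (hA hb)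
  set Y := (#V - 1).choose (j+1) with hY
  set Z := (#V)^j with hZ
  by_cases hx : ∃ x, ∀ b ∈ B, x ∈ b
  · obtain ⟨x, hx⟩ := hx
    have hxV : x ∈ V := (cB b1 hb1).1 (hx b1 hb1)
    by_cases hxA : ∀ a ∈ A, x ∈ a
    · apply le_max_of_le_right
      have h1 := star_le V (j+1) x hxV A hA hxA
      have h2 := star_le V (j+1) x hxV B hB hx
      rw [← hY] at h1 h2
      have := Nat.mul_le_mul_left c h2
      rw [Nat.add_mul]; omega
    · push Not at hxA
      obtain ⟨a0, ha0, hxa0⟩ := hxA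
      have hBZ : #B ≤ (j+2) * Z := by
        have h1 := star_meets V B j x a0 hB hxa0
        rw [(cA a0 ha0).2] at h1
        refine le_trans (card_le_card ?_) h1
        intro b hb
        exact mem_filter.2 ⟨hb, hx b hb, fun h => hcr a0 ha0 b hb h.symm⟩
      have hAX : #A + (#V - (j+2)).choose (j+2) ≤ (#V).choose (j+2) := by
        have h1 := meets_card V b1 (j+2) (cB b1 hb1).1
        rw [(cB b1 hb1).2] at h1
        rw [← h1]
        apply Nat.add_le_add_right
        apply card_le_card
        intro a ha
        exact mem_filter.2 ⟨hA ha, hcr a ha b1 hb1⟩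
      by_cases hone : #B = 1
      · apply le_max_of_le_left
        rw [hone]; omega
      · have : 1 < #B := by
          have : 0 < #B := card_pos.2 ⟨b1, hb1⟩
          omega
        obtain ⟨b2, hb2, hne⟩ := exists_mem_ne this b1
        have hAY : #A ≤ (j+2) * Y := by
          have := hits_le V b1 (j+1) (cB b1 hb1).1 A hA (fun a ha => hcr a ha b1 hb1)
          rwa [(cB b1 hb1).2] at this
        by_cases hc : j + 2 ≤ c
        · apply le_max_of_le_right
          obtain ⟨d, rfl⟩ := Nat.exists_eq_add_of_le hc
          have h3 := Nat.mul_le_mul_left (j+2+d) hBZ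
          nlinarith [Nat.mul_le_mul_left (1+d) hlarge, Nat.zero_le (d*j*Z), Nat.zero_le (d*j*j*Z), Nat.zero_le (j*Z), Nat.zero_le (j*j*Z), Nat.zero_le (d*Z)]
        · apply le_max_of_le_left
          have hint : #(b1 ∩ b2) ≤ j+1 := by
            by_contra hcon
            have h1 : b1 ∩ b2 = b1 := eq_of_subset_of_card_le inter_subset_left
              (by rw [(cB b1 hb1).2]; omega)
            have h2 : b1 ∩ b2 = b2 := eq_of_subset_of_card_le inter_subset_right
              (by rw [(cB b2 hb2).2]; omega)
            exact hne (h2.symm.trans h1)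
          have hA2 : #A ≤ (j+1) * Y + (j+2) * ((j+2) * Z) := by
            rw [← card_filter_add_card_filter_not (s := A) (fun a => ¬ Disjoint a (b1 ∩ b2))]
            apply Nat.add_le_add
            · have := hits_le V (b1 ∩ b2) (j+1) (inter_subset_left.trans (cB b1 hb1).1)
                (A.filter (fun a => ¬ Disjoint a (b1 ∩ b2))) ((filter_subset _ _).trans hA)
                (fun a ha => (mem_filter.1 ha).2)
              exact this.trans (Nat.mul_le_mul_right _ hint)
            · calc _ ≤ #((b1 \ b2).biUnion fun y => A.filter (fun a => y ∈ a ∧ ¬ Disjoint a b2)) := by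
                    apply card_le_card
                    intro a ha
                    rw [mem_filter, not_not] at ha
                    obtain ⟨y, h1, h2⟩ := not_disjoint_iff.1 (hcr a ha.1 b1 hb1)
                    refine mem_biUnion.2 ⟨y, ?_, mem_filter.2 ⟨ha.1, h1, hcr a ha.1 b2 hb2⟩⟩
                    rw [mem_sdiff]
                    refine ⟨h2, fun h3 => ?_⟩
                    exact (disjoint_left.1 ha.2 h1) (mem_inter.2 ⟨h2, h3⟩)
                _ ≤ #(b1 \ b2) * ((j+2) * Z) := by
                    apply card_biUnion_le_card_mul
                    intro y hy
                    have := star_meets V A j y b2 hA (mem_sdiff.1 hy).2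
                    rwa [(cB b2 hb2).2] at this
                _ ≤ _ := by
                    apply Nat.mul_le_mul_right
                    rw [← (cB b1 hb1).2]
                    exact card_le_card sdiff_subset
          have hX := choose_lo (#V - (j+2)) (j+1) (j+2)
          rw [Nat.sub_add_cancel hN] at hX
          have hYu := choose_up (#V - (j+2)) j (j+1)
          have e : #V - (j+2) + (j+1) = #V - 1 := by omega
          rw [e, ← hY] at hYu
          have hZ' : (#V - 1)^j ≤ Z := Nat.pow_le_pow_left (by omega) _
          have hYu2 := hYu.trans (Nat.add_le_add_left (Nat.mul_le_mul_left (j+1) hZ') _)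
          have hcB : c * #B ≤ (j+2) * ((j+2) * Z) := Nat.mul_le_mul (by omega) hBZ
          have key : #A + c * #B ≤ (j+2) * (#V - (j+2)).choose (j+1) := by
            nlinarith [Nat.mul_le_mul_left (j+2) hYu2]
          have e2 : j + 1 + 1 = j + 2 := rfl
          rw [e2] at hX
          omega
  · push Not at hx
    apply le_max_of_le_right
    choose f hf1 hf2 using hx
    have h1 : #A ≤ (j+2) * ((j+2) * Z) := by
      calc #A ≤ #(b1.biUnion fun y => A.filter (fun a => y ∈ a ∧ ¬ Disjoint a (f y))) := by
            apply card_le_card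
            intro a ha
            obtain ⟨y, h1, h2⟩ := not_disjoint_iff.1 (hcr a ha b1 hb1)
            exact mem_biUnion.2 ⟨y, h2, mem_filter.2 ⟨ha, h1, hcr a ha _ (hf1 y)⟩⟩
        _ ≤ #b1 * ((j+2) * Z) := by
            apply card_biUnion_le_card_mul
            intro y hy
            have := star_meets V A j y (f y) hA (hf2 y)
            rwa [(cB _ (hf1 y)).2] at this
        _ = _ := by rw [(cB b1 hb1).2]
    have h2 : #A ≤ Y := by nlinarith
    nlinarith [Nat.mul_le_mul_left c (hle.trans h2)]

theorem crossm (j c : ℕ) (hc : 1 ≤ c) (V S : Finset ℕ) (L : ℕ → Finset (Finset ℕ))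
    (hS : #S = c + 1)
    (hL : ∀ x ∈ S, L x ⊆ V.powersetCard (j+2))
    (hLn : ∀ x ∈ S, (L x).Nonempty)
    (hcr : ∀ x ∈ S, ∀ y ∈ S, x ≠ y → ∀ a ∈ L x, ∀ b ∈ L y, ¬ Disjoint a b)
    (hN : j + 2 ≤ #V)
    (hlarge : 3 * (j+2)^2 * (#V)^j ≤ (#V - 1).choose (j+1)) :
    ∑ x ∈ S, #(L x) ≤ max ((#V).choose (j+2) - (#V - (j+2)).choose (j+2) + c)
      ((1+c) * (#V - 1).choose (j+1)) := by
  obtain ⟨x0, hx0, hmax⟩ := exists_max_image S (fun x => #(L x)) (card_pos.1 (by omega))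
  set Mx := max ((#V).choose (j+2) - (#V - (j+2)).choose (j+2) + c)
      ((1+c) * (#V - 1).choose (j+1))
  have h : ∀ x ∈ S.erase x0, #(L x0) + c * #(L x) ≤ Mx := by
    intro x hx
    rw [mem_erase] at hx
    exact cross2 j c V (L x0) (L x) (hL _ hx0) (hL _ hx.2) (hLn _ hx.2)
      (hcr x0 hx0 x hx.2 (Ne.symm hx.1)) (hmax x hx.2) hN hlarge
  have h2 := sum_le_sum h
  rw [sum_add_distrib, sum_const, sum_const, ← mul_sum, card_erase_of_mem hx0, hS] at h2
  simp only [Nat.add_sub_cancel, smul_eq_mul, ← Nat.mul_add] at h2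
  rw [← add_sum_erase S _ hx0]
  exact Nat.le_of_mul_le_mul_left h2 hc

def IsM (M : Finset (Finset ℕ)) : Prop := ∀ A ∈ M, ∀ B ∈ M, A ≠ B → Disjoint A B

lemma IsM.card_biUnion {M : Finset (Finset ℕ)} (h : IsM M) {k : ℕ} (hk : ∀ A ∈ M, #A = k) :
    #(M.biUnion id) = k * #M := by
  rw [Finset.card_biUnion (t := id) (fun A hA B hB hne => h A hA B hB hne)]
  rw [sum_congr (g := fun _ => k) rfl (fun A hA => by simpa using hk A hA), sum_const, smul_eq_mul, mul_comm]

lemma IsM.insert {M : Finset (Finset ℕ)} (h : IsM M) {A : Finset ℕ}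
    (hA : Disjoint A (M.biUnion id)) : IsM (insert A M) := by
  have h' : ∀ B ∈ M, Disjoint A B := fun B hB =>
    disjoint_of_subset_right (subset_biUnion_of_mem id hB) hA
  intro B hB C hC hne
  rw [mem_insert] at hB hC
  rcases hB with rfl | hB <;> rcases hC with rfl | hC
  · exact absurd rfl hne
  · exact h' C hC
  · exact (h' B hB).symm
  · exact h B hB C hC hne

lemma IsM.union {M N : Finset (Finset ℕ)} (h : IsM M) (h2 : IsM N)
    (hA : ∀ A ∈ M, ∀ B ∈ N, Disjoint A B) : IsM (M ∪ N) := by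
  intro B hB C hC hne
  rw [mem_union] at hB hC
  rcases hB with hB | hB <;> rcases hC with hC | hC
  · exact h B hB C hC hne
  · exact hA B hB C hC
  · exact (hA C hC B hB).symm
  · exact h2 B hB C hC hne

lemma IsM.mono {M N : Finset (Finset ℕ)} (h : IsM M) (hs : N ⊆ M) : IsM N :=
  fun A hA B hB hne => h A (hs hA) B (hs hB) hne

lemma exchange (p : ℕ) (F M : Finset (Finset ℕ)) (hMF : M ⊆ F) (hM : IsM M)
    (u : Fin (p+1) → ℕ) (hu : Function.Injective u) (hun : ∀ i, ∀ A ∈ M, u i ∉ A)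
    (g : Finset ℕ → Fin (p+1) → ℕ) (hg : ∀ A ∈ M, Function.Injective (g A))
    (hgm : ∀ A ∈ M, ∀ i, g A i ∈ A)
    (T : Finset (Finset ℕ)) (hT : T ⊆ M) (hTc : #T = p)
    (hall : ∀ i, insert (u i) (T.image (fun A => g A i)) ∈ F) :
    ∃ M' ⊆ F, IsM M' ∧ #M' = #M + 1 ∧
      ∀ A ∈ M', A ∈ M ∨ A ⊆ univ.image u ∪ M.biUnion id := by
  set f : Fin (p+1) → Finset ℕ := fun i => insert (u i) (T.image (fun A => g A i)) with hf
  have hdis : ∀ i j, i ≠ j → Disjoint (f i) (f j) := by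
    intro i j hij
    rw [disjoint_left]
    intro z hz hz'
    simp only [hf, mem_insert, mem_image] at hz hz'
    rcases hz with rfl | ⟨A, hA, rfl⟩ <;> rcases hz' with h | ⟨B, hB, h⟩
    · exact hij (hu h)
    · exact hun i B (hT hB) (h ▸ hgm B (hT hB) j)
    · exact hun j A (hT hA) (h ▸ hgm A (hT hA) i)
    · have hAB : A = B := by
        by_contra hne
        exact disjoint_left.1 (hM A (hT hA) B (hT hB) hne) (hgm A (hT hA) i)
          (h ▸ hgm B (hT hB) j)
      subst hAB
      exact hij (hg A (hT hA) h).symm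
  have hfinj : Function.Injective f := by
    intro i j h
    by_contra hne
    have h1 := hdis i j hne
    rw [h, disjoint_self_iff_empty] at h1
    exact (insert_ne_empty _ _) h1
  have hcr : ∀ A ∈ M \ T, ∀ B ∈ univ.image f, Disjoint A B := by
    intro A hA B hB
    obtain ⟨i, -, rfl⟩ := mem_image.1 hB
    rw [mem_sdiff] at hA
    rw [disjoint_left]
    intro z hz hz'
    simp only [hf, mem_insert, mem_image] at hz'
    rcases hz' with rfl | ⟨C, hC, rfl⟩
    · exact hun i A hA.1 hz
    · have hne : A ≠ C := fun h => hA.2 (h ▸ hC)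
      exact disjoint_left.1 (hM A hA.1 C (hT hC) hne) hz (hgm C (hT hC) i)
  refine ⟨(M \ T) ∪ univ.image f, ?_, ?_, ?_, ?_⟩
  · apply union_subset (sdiff_subset.trans hMF)
    intro B hB
    obtain ⟨i, -, rfl⟩ := mem_image.1 hB
    exact hall i
  · apply IsM.union (hM.mono sdiff_subset) _ hcr
    intro A hA B hB hne
    obtain ⟨i, -, rfl⟩ := mem_image.1 hA
    obtain ⟨j, -, rfl⟩ := mem_image.1 hB
    exact hdis i j (fun h => hne (h ▸ rfl))
  · rw [card_union_of_disjoint, card_sdiff_of_subset hT, hTc, card_image_of_injective _ hfinj,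
      card_univ, Fintype.card_fin]
    · have := card_le_card hT
      omega
    · rw [disjoint_left]
      intro A hA hA'
      have h1 := hcr A hA A hA'
      rw [disjoint_self_iff_empty] at h1
      obtain ⟨i, -, rfl⟩ := mem_image.1 hA'
      exact (insert_ne_empty _ _) h1
  · intro A hA
    rw [mem_union] at hA
    rcases hA with hA | hA
    · exact Or.inl (mem_sdiff.1 hA).1
    · right
      obtain ⟨i, -, rfl⟩ := mem_image.1 hA
      intro z hz
      simp only [hf, mem_insert, mem_image] at hz
      rw [mem_union]
      rcases hz with rfl | ⟨C, hC, rfl⟩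
      · left; exact mem_image_of_mem _ (mem_univ _)
      · right; exact mem_biUnion.2 ⟨C, hT hC, hgm C (hT hC) i⟩

theorem pm (p q : ℕ) (W : Finset ℕ) (F : Finset (Finset ℕ)) (hF : ∀ A ∈ F, #A = p+1)
    (hW : (p+2)*q ≤ #W)
    (hmiss : ∀ u ∈ W, (p+1) * #(((W.powersetCard (p+1)) \ F).filter (fun A => u ∈ A))
      < q.choose p) :
    ∃ M ⊆ F, IsM M ∧ (∀ A ∈ M, A ⊆ W) ∧ #W < (p+1) * #M + (p+1) := by
  classical
  set Q := F.powerset.filter (fun M => IsM M ∧ ∀ A ∈ M, A ⊆ W) with hQ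
  have hQn : Q.Nonempty := ⟨∅, mem_filter.2 ⟨by simp, by simp [IsM], by simp⟩⟩
  obtain ⟨M, hMQ, hmax⟩ := exists_max_image Q card hQn
  rw [hQ, mem_filter, mem_powerset] at hMQ
  obtain ⟨hMF, hM, hMW⟩ := hMQ
  refine ⟨M, hMF, hM, hMW, ?_⟩
  by_contra hcon
  push Not at hcon
  have hVc : #(M.biUnion id) = (p+1) * #M := hM.card_biUnion (fun A hA => hF A (hMF hA))
  have hVW : M.biUnion id ⊆ W := biUnion_subset.2 hMW
  have hRc : #(W \ M.biUnion id) = #W - (p+1) * #M := by rw [card_sdiff_of_subset hVW, hVc]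
  by_cases hq : q ≤ #M
  ·
    obtain ⟨U, hU, hUc⟩ := exists_subset_card_eq (s := W \ M.biUnion id) (n := p+1) (by omega)
    let u : Fin (p+1) → ℕ := U.orderEmbOfFin hUc
    have huinj : Function.Injective u := (U.orderEmbOfFin hUc).injective
    have huU : ∀ i, u i ∈ W \ M.biUnion id := fun i => hU (orderEmbOfFin_mem U hUc i)
    have hun : ∀ i, ∀ A ∈ M, u i ∉ A := by
      intro i A hA h
      exact (mem_sdiff.1 (huU i)).2 (mem_biUnion.2 ⟨A, hA, h⟩)
    let g : Finset ℕ → Fin (p+1) → ℕ := fun A =>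
      if h : #A = p+1 then A.orderEmbOfFin h else fun _ => 0
    have hg : ∀ A ∈ M, Function.Injective (g A) := by
      intro A hA
      have h := hF A (hMF hA)
      simp only [g, h, dif_pos]
      exact (A.orderEmbOfFin h).injective
    have hgm : ∀ A ∈ M, ∀ i, g A i ∈ A := by
      intro A hA i
      have h := hF A (hMF hA)
      simp only [g, h, dif_pos]
      exact orderEmbOfFin_mem A h i
    let f : Fin (p+1) → Finset (Finset ℕ) → Finset ℕ :=
      fun i T => insert (u i) (T.image (fun A => g A i))
    have hbad : ∀ T ∈ M.powersetCard p, ∃ i, f i T ∉ F := by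
      intro T hT
      rw [mem_powersetCard] at hT
      by_contra hall
      push Not at hall
      obtain ⟨M', h1, h2, h3, h4⟩ := exchange p F M hMF hM u huinj hun g hg hgm T hT.1 hT.2 hall
      have : M' ∈ Q := by
        rw [hQ, mem_filter, mem_powerset]
        refine ⟨h1, h2, fun A hA => ?_⟩
        rcases h4 A hA with h | h
        · exact hMW A h
        · refine h.trans (union_subset ?_ hVW)
          intro z hz
          obtain ⟨i, -, rfl⟩ := mem_image.1 hz
          exact (mem_sdiff.1 (huU i)).1
      have := hmax M' this
      omega
    have hfc : ∀ i, ∀ T ∈ M.powersetCard p, f i T ∈ W.powersetCard (p+1) := by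
      intro i T hT
      rw [mem_powersetCard] at hT ⊢
      constructor
      · apply insert_subset (mem_sdiff.1 (huU i)).1
        intro z hz
        obtain ⟨A, hA, rfl⟩ := mem_image.1 hz
        exact hMW A (hT.1 hA) (hgm A (hT.1 hA) i)
      · rw [card_insert_of_notMem, card_image_of_injOn, hT.2]
        · intro A hA B hB h
          by_contra hne
          have h' : g A i = g B i := h
          exact disjoint_left.1 (hM A (hT.1 hA) B (hT.1 hB) hne) (hgm A (hT.1 hA) i)
            (h' ▸ hgm B (hT.1 hB) i)
        · intro hz
          obtain ⟨A, hA, h⟩ := mem_image.1 hz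
          exact hun i A (hT.1 hA) (h ▸ hgm A (hT.1 hA) i)
    have hrec : ∀ i, ∀ T ∈ M.powersetCard p, T = M.filter (fun A => g A i ∈ f i T) := by
      intro i T hT
      rw [mem_powersetCard] at hT
      ext A
      rw [mem_filter]
      constructor
      · intro hA
        exact ⟨hT.1 hA, mem_insert_of_mem (mem_image_of_mem (fun A => g A i) hA)⟩
      · rintro ⟨hA, h⟩
        rw [mem_insert, mem_image] at h
        rcases h with h | ⟨B, hB, h⟩
        · exact absurd (h ▸ hgm A hA i) (hun i A hA)
        · by_cases hne : A = B
          · rwa [hne]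
          · exact absurd (h ▸ hgm B (hT.1 hB) i)
              (disjoint_left.1 (hM A hA B (hT.1 hB) hne) (hgm A hA i))
    have hsum : #(M.powersetCard p) ≤
        ∑ i : Fin (p+1), #(((W.powersetCard (p+1)) \ F).filter (fun A => u i ∈ A)) := by
      calc _ ≤ #(univ.biUnion fun i : Fin (p+1) =>
              (M.powersetCard p).filter (fun T => f i T ∉ F)) := by
            apply card_le_card
            intro T hT
            obtain ⟨i, hi⟩ := hbad T hT
            exact mem_biUnion.2 ⟨i, mem_univ _, mem_filter.2 ⟨hT, hi⟩⟩
        _ ≤ ∑ i : Fin (p+1), #((M.powersetCard p).filter (fun T => f i T ∉ F)) := card_biUnion_le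
        _ ≤ _ := by
            apply sum_le_sum
            intro i _
            apply card_le_card_of_injOn (f i)
            · intro T hT
              have hT' := mem_filter.1 hT
              exact mem_filter.2 ⟨mem_sdiff.2 ⟨hfc i T hT'.1, hT'.2⟩, mem_insert_self _ _⟩
            · intro T hT T' hT' h
              rw [hrec i T (mem_filter.1 hT).1, hrec i T' (mem_filter.1 hT').1, h]
    rw [card_powersetCard] at hsum
    have h1 : q.choose p ≤ (#M).choose p := Nat.choose_le_choose _ hq
    have h2 : ∑ i : Fin (p+1), (p+1) * #(((W.powersetCard (p+1)) \ F).filter (fun A => u i ∈ A))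
        < ∑ i : Fin (p+1), q.choose p := by
      apply sum_lt_sum_of_nonempty univ_nonempty
      intro i _
      exact hmiss (u i) (mem_sdiff.1 (huU i)).1
    rw [← mul_sum, sum_const, card_univ, Fintype.card_fin, smul_eq_mul] at h2
    have := Nat.lt_of_mul_lt_mul_left h2
    omega
  · push Not at hq
    have hne : (W \ M.biUnion id).Nonempty := by
      rw [← card_pos, hRc]; omega
    obtain ⟨u, hu⟩ := hne
    have h1 := star_card (W \ M.biUnion id) p u hu
    have h2 := hmiss u (mem_sdiff.1 hu).1
    have h3 : #(((W \ M.biUnion id).powersetCard (p+1)).filter (fun A => u ∈ A)) ≤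
        #(((W.powersetCard (p+1)) \ F).filter (fun A => u ∈ A)) := by
      apply card_le_card
      intro A hA
      rw [mem_filter, mem_powersetCard] at hA
      rw [mem_filter, mem_sdiff, mem_powersetCard]
      refine ⟨⟨⟨hA.1.1.trans sdiff_subset, hA.1.2⟩, fun hAF => ?_⟩, hA.2⟩
      have hd : Disjoint A (M.biUnion id) :=
        disjoint_of_subset_left hA.1.1 sdiff_disjoint
      have hAM : A ∉ M := fun h =>
        disjoint_left.1 hd hA.2 (mem_biUnion.2 ⟨A, h, hA.2⟩)
      have : insert A M ∈ Q := by
        rw [hQ, mem_filter, mem_powerset]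
        refine ⟨insert_subset hAF hMF, hM.insert hd, fun B hB => ?_⟩
        rcases mem_insert.1 hB with rfl | hB
        · exact hA.1.1.trans sdiff_subset
        · exact hMW B hB
      have := hmax _ this
      rw [card_insert_of_notMem hAM] at this
      omega
    have h4 : q ≤ #(W \ M.biUnion id) - 1 := by
      rw [hRc]
      have : (p+1) * (#M + 1) ≤ (p+1) * q := Nat.mul_le_mul_left _ hq
      have e1 : (p+2) * q = (p+1)*q + q := by ring
      have e2 : (p+1) * (#M + 1) = (p+1) * #M + (p+1) := by ring
      omega
    have h5 : q.choose p ≤ _ := Nat.choose_le_choose p h4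
    rw [← h1] at h5
    have h6 := Nat.le_mul_of_pos_left (#(((W.powersetCard (p+1)) \ F).filter (fun A => u ∈ A)))
      (Nat.succ_pos p)
    simp only [Nat.succ_eq_add_one] at h6
    omega

lemma greedy (p L : ℕ) (V : Finset ℕ) (F MS : Finset (Finset ℕ))
    (hF : F ⊆ V.powersetCard (p+2)) (hMS : MS ⊆ F) (hM : IsM MS) (X : Finset ℕ)
    (hL : #MS + #X ≤ L)
    (hd : ∀ v ∈ X, (p+2) * L * (#V)^p < #(F.filter (fun A => v ∈ A))) :
    ∃ M ⊆ F, MS ⊆ M ∧ IsM M ∧ X ⊆ M.biUnion id ∧ #M ≤ #MS + #X := by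
  induction X using Finset.induction_on with
  | empty => exact ⟨MS, hMS, Subset.rfl, hM, by simp, by simp⟩
  | insert v X hv ih =>
    rw [card_insert_of_notMem hv] at hL ⊢
    obtain ⟨M, h1, h2, h3, h4, h5⟩ := ih (by omega) (fun w hw => hd w (mem_insert_of_mem hw))
    by_cases hvM : v ∈ M.biUnion id
    · exact ⟨M, h1, h2, h3, insert_subset hvM h4, by omega⟩
    · have hc := h3.card_biUnion (fun A hA => (mem_powersetCard.1 (hF (h1 hA))).2)
      have hs := star_meets V F p v (M.biUnion id) hF hvM
      have hdv := hd v (mem_insert_self _ _)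
      have : (p+2) * #M * (#V)^p ≤ (p+2) * L * (#V)^p :=
        Nat.mul_le_mul_right _ (Nat.mul_le_mul_left _ (by omega))
      rw [hc] at hs
      have : ∃ A ∈ F, v ∈ A ∧ Disjoint A (M.biUnion id) := by
        by_contra hcon
        push Not at hcon
        have : F.filter (fun A => v ∈ A) ⊆
          F.filter (fun A => v ∈ A ∧ ¬ Disjoint A (M.biUnion id)) := by
          intro A hA
          rw [mem_filter] at hA ⊢
          exact ⟨hA.1, hA.2, hcon A hA.1 hA.2⟩
        have := card_le_card this
        omega
      obtain ⟨A, hA, hvA, hdis⟩ := this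
      refine ⟨insert A M, insert_subset hA h1, h2.trans (subset_insert _ _), h3.insert hdis, ?_, ?_⟩
      · rw [biUnion_insert]
        exact insert_subset (mem_union_left _ hvA) (h4.trans subset_union_right)
      · exact (card_insert_le _ _).trans (by omega)

theorem cover (p q : ℕ) (V S B : Finset ℕ) (F MS : Finset (Finset ℕ))
    (hF : F ⊆ V.powersetCard (p+2)) (hSB : S ⊆ B) (hBV : B ⊆ V)
    (hgood : ∀ u ∈ V \ B, (p+2) * #(((V.powersetCard (p+2)) \ F).filter (fun A => u ∈ A))
      < q.choose (p+1))
    (hmid : ∀ v ∈ B \ S, (p+2) * (2 * #B) * (#V)^p < #(F.filter (fun A => v ∈ A)))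
    (hsize : (p+3) * q + (2*(p+2)+1) * #B ≤ #V)
    (hMS : MS ⊆ F) (hM : IsM MS) (hMSc : #MS ≤ #S) :
    ∃ M ⊆ F, IsM M ∧ #V + #(S ∩ MS.biUnion id) ≤ (p+2) * #M + (p+1) + #S := by
  have hSc := card_le_card hSB
  have hBSc : #(B \ S) ≤ #B := card_le_card sdiff_subset
  have hcF : ∀ A ∈ F, #A = p+2 := fun A hA => (mem_powersetCard.1 (hF hA)).2
  obtain ⟨M1, h1, h2, h3, h4, h5⟩ := greedy p (2 * #B) V F MS hF hMS hM (B \ S) (by omega) hmid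
  have hc1 := h3.card_biUnion (fun A hA => hcF A (h1 hA))
  set D := S ∪ M1.biUnion id with hD
  have hDV : D ⊆ V := union_subset (hSB.trans hBV)
    (biUnion_subset.2 fun A hA => (mem_powersetCard.1 (hF (h1 hA))).1)
  have hWc : #(V \ D) = #V - #D := card_sdiff_of_subset hDV
  have hDc : #D ≤ #S + (p+2) * #M1 := (card_union_le _ _).trans (by rw [hc1])
  have hDc2 : #D + #(S ∩ MS.biUnion id) ≤ #S + (p+2) * #M1 := by
    have e := card_union_add_card_inter S (M1.biUnion id)
    have : #(S ∩ MS.biUnion id) ≤ #(S ∩ M1.biUnion id) :=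
      card_le_card (inter_subset_inter_left (biUnion_subset_biUnion_of_subset_left _ h2))
    rw [← hD, hc1] at e
    omega
  have hM1c : (p+2) * #M1 ≤ (p+2) * (2 * #B) := Nat.mul_le_mul_left _ (by omega)
  have hWq : (p+1+2) * q ≤ #(V \ D) := by
    rw [hWc]
    have : (2*(p+2)+1) * #B = (p+2) * (2 * #B) + #B := by ring
    have e : p + 1 + 2 = p + 3 := rfl
    rw [e]
    omega
  have hDle := card_le_card hDV
  obtain ⟨M2, g1, g2, g3, g4⟩ := pm (p+1) q (V \ D) F hcF hWq (by
    intro u hu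
    have huB : u ∈ V \ B := by
      rw [mem_sdiff] at hu ⊢
      refine ⟨hu.1, fun h => hu.2 ?_⟩
      by_cases hS : u ∈ S
      · exact mem_union_left _ hS
      · exact mem_union_right _ (h4 (mem_sdiff.2 ⟨h, hS⟩))
    refine lt_of_le_of_lt (Nat.mul_le_mul_left _ (card_le_card ?_)) (hgood u huB)
    apply filter_subset_filter
    apply sdiff_subset_sdiff _ Subset.rfl
    exact powersetCard_mono sdiff_subset)
  have hdis : ∀ A ∈ M1, ∀ B ∈ M2, Disjoint A B := by
    intro A hA B hB
    have hAD : A ⊆ D := (subset_biUnion_of_mem id hA).trans subset_union_right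
    exact disjoint_of_subset_left hAD (disjoint_of_subset_right (g3 B hB) disjoint_sdiff)
  refine ⟨M1 ∪ M2, union_subset h1 g1, h3.union g2 hdis, ?_⟩
  rw [card_union_of_disjoint]
  · rw [hWc] at g4
    rw [Nat.mul_add]
    have e : p + 1 + 1 = p + 2 := rfl
    rw [e] at g4
    omega
  · rw [disjoint_left]
    intro A hA hA'
    have := hdis A hA A hA'
    rw [disjoint_self_iff_empty] at this
    have hc := hcF A (h1 hA)
    rw [this] at hc
    simp at hc

lemma sum_deg_le (V : Finset ℕ) (G : Finset (Finset ℕ)) (k : ℕ) (hG : G ⊆ V.powersetCard k) :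
    ∑ v ∈ V, #(G.filter (fun A => v ∈ A)) = k * #G := by
  have h := sum_card_bipartiteAbove_eq_sum_card_bipartiteBelow (s := V) (t := G)
    (fun (v : ℕ) (A : Finset ℕ) => v ∈ A)
  simp only [bipartiteAbove, bipartiteBelow] at h
  rw [h, sum_congr rfl (g := fun _ => k), sum_const, smul_eq_mul, mul_comm]
  intro A hA
  have hA' := mem_powersetCard.1 (hG hA)
  rw [← hA'.2]
  congr 1
  ext v
  rw [mem_filter]
  exact ⟨fun h => h.2, fun h => ⟨hA'.1 h, h⟩⟩

lemma cover_ge (M : Finset (Finset ℕ)) (S : Finset ℕ) (hM : IsM M)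
    (h : ∀ A ∈ M, ¬ Disjoint A S) : #M ≤ #(S ∩ M.biUnion id) := by
  have e : S ∩ M.biUnion id = M.biUnion (fun A => S ∩ A) := by
    ext x; simp only [mem_inter, mem_biUnion, id]; tauto
  rw [e, Finset.card_biUnion]
  · calc #M = ∑ A ∈ M, 1 := by simp
      _ ≤ _ := by
        apply sum_le_sum
        intro A hA
        rw [Nat.one_le_iff_ne_zero, Ne, card_eq_zero, ← disjoint_iff_inter_eq_empty]
        exact fun h' => h A hA h'.symm
  · intro A hA B hB hne
    exact disjoint_of_subset_left inter_subset_right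
      (disjoint_of_subset_right inter_subset_right (hM A hA B hB hne))

lemma split_card (V S : Finset ℕ) (F : Finset (Finset ℕ)) (k : ℕ) (hF : F ⊆ V.powersetCard k)
    (hS : S ⊆ V) :
    #F ≤ (#V - #S).choose k + ∑ x ∈ S, #(F.filter (fun A => x ∈ A)) := by
  rw [← card_filter_add_card_filter_not (s := F) (fun A => Disjoint A S)]
  apply Nat.add_le_add
  · rw [← card_sdiff_of_subset hS, ← card_powersetCard]
    apply card_le_card
    intro A hA
    rw [mem_filter] at hA
    have h := mem_powersetCard.1 (hF hA.1)
    exact mem_powersetCard.2 ⟨subset_sdiff.2 ⟨h.1, hA.2⟩, h.2⟩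
  · refine le_trans (card_le_card ?_) card_biUnion_le
    intro A hA
    rw [mem_filter, not_disjoint_iff] at hA
    obtain ⟨h1, x, h2, h3⟩ := hA
    exact mem_biUnion.2 ⟨x, h3, mem_filter.2 ⟨h1, h2⟩⟩

lemma case_one (j m N : ℕ) (V S : Finset ℕ) (F : Finset (Finset ℕ))
    (hF : F ⊆ V.powersetCard (j+3)) (hS : S ⊆ V) (hSm : #S = m) (hm : 2 ≤ m)
    (hn : #V = N + m)
    (hnon : ∀ v ∈ V, ∃ A ∈ F, v ∈ A)
    (ht : ∀ M ⊆ F, IsM M → (∀ A ∈ M, ¬ Disjoint A S) → #(S ∩ M.biUnion id) ≤ 1)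
    (hN : j + 2 ≤ N)
    (hlarge : 3 * (j+2)^2 * N^j ≤ (N - 1).choose (j+1)) :
    #F ≤ N.choose (j+3) + max (N.choose (j+2) - (N - (j+2)).choose (j+2) + (m-1))
      (m * (N - 1).choose (j+1)) := by
  have hone : ∀ A ∈ F, ∀ x ∈ S, x ∈ A → ∀ y ∈ S, y ∈ A → y = x := by
    intro A hA x hx hxA y hy hyA
    have h := ht {A} (singleton_subset_iff.2 hA) (by simp [IsM])
      (by
        intro B hB
        rw [mem_singleton] at hB
        subst hB
        exact not_disjoint_iff.2 ⟨x, hxA, hx⟩)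
    rw [card_le_one] at h
    exact h y (by simp [hy, hyA]) x (by simp [hx, hxA])
  let L : ℕ → Finset (Finset ℕ) := fun x => (F.filter (fun A => x ∈ A)).image (fun A => A.erase x)
  have hLc : ∀ x, #(L x) = #(F.filter (fun A => x ∈ A)) := by
    intro x
    apply card_image_of_injOn
    intro A hA B hB h
    have hA' := (mem_filter.1 hA).2
    have hB' := (mem_filter.1 hB).2
    have h' : A.erase x = B.erase x := h
    rw [← insert_erase hA', ← insert_erase hB', h']
  have hVS : #(V \ S) = N := by rw [card_sdiff_of_subset hS]; omega
  have h1 := split_card V S F (j+3) hF hS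
  have e : #V - #S = N := by omega
  rw [e] at h1
  refine h1.trans (Nat.add_le_add_left ?_ _)
  rw [← sum_congr rfl (fun x _ => hLc x)]
  have h2 := crossm j (m-1) (by omega) (V \ S) S L (by omega) (by
      intro x hx a ha
      obtain ⟨A, hA, rfl⟩ := mem_image.1 ha
      rw [mem_filter] at hA
      have h := mem_powersetCard.1 (hF hA.1)
      rw [mem_powersetCard, card_erase_of_mem hA.2, h.2]
      refine ⟨?_, by omega⟩
      intro z hz
      rw [mem_erase] at hz
      exact mem_sdiff.2 ⟨h.1 hz.2, fun hzS => hz.1 (hone A hA.1 x hx hA.2 z hzS hz.2)⟩)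
    (by
      intro x hx
      obtain ⟨A, hA, hxA⟩ := hnon x (hS hx)
      exact ⟨A.erase x, mem_image_of_mem _ (mem_filter.2 ⟨hA, hxA⟩)⟩)
    (by
      intro x hx y hy hxy a ha b hb hdis
      obtain ⟨A, hA, rfl⟩ := mem_image.1 ha
      obtain ⟨B, hB, rfl⟩ := mem_image.1 hb
      rw [mem_filter] at hA hB
      have hAB : Disjoint A B := by
        rw [disjoint_left] at hdis ⊢
        intro z hzA hzB
        by_cases hzx : z = x
        · subst hzx
          exact hxy (hone B hB.1 y hy hB.2 z hx hzB)
        · by_cases hzy : z = y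
          · subst hzy
            exact hxy (hone A hA.1 x hx hA.2 z hy hzA).symm
          · exact hdis (mem_erase.2 ⟨hzx, hzA⟩) (mem_erase.2 ⟨hzy, hzB⟩)
      have h := ht {A, B} (by
          intro C hC
          simp only [mem_insert, mem_singleton] at hC
          rcases hC with rfl | rfl
          · exact hA.1
          · exact hB.1) (by
          intro C hC D hD hne
          simp only [mem_insert, mem_singleton] at hC hD
          rcases hC with rfl | rfl <;> rcases hD with rfl | rfl
          · exact absurd rfl hne
          · exact hAB
          · exact hAB.symm
          · exact absurd rfl hne) (by
          intro C hC
          simp only [mem_insert, mem_singleton] at hC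
          rcases hC with rfl | rfl
          · exact not_disjoint_iff.2 ⟨x, hA.2, hx⟩
          · exact not_disjoint_iff.2 ⟨y, hB.2, hy⟩)
      rw [card_le_one] at h
      exact hxy (h x (by simp [hx, hA.2]) y (by simp [hy, hB.2])))
    (by omega) (by rw [hVS]; exact hlarge)
  rw [hVS] at h2
  have e2 : 1 + (m - 1) = m := by omega
  rwa [e2] at h2

set_option maxHeartbeats 1000000 in
theorem core (j N m s C q : ℕ) (V : Finset ℕ) (F : Finset (Finset ℕ))
    (hn : #V = N + m) (hm : 2 ≤ m) (hN : N + 2 = (j+3)*s + (j+3)) (hN2 : j + 2 ≤ N)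
    (hF : F ⊆ V.powersetCard (j+3))
    (hnon : ∀ v ∈ V, ∃ A ∈ F, v ∈ A)
    (hnu : ∀ M ⊆ F, IsM M → #M ≤ s)
    (hC : 1 ≤ C) (hCq : #V * (#V)^(j+1) ≤ C * q.choose (j+2))
    (hq : 4 * (j+3) * q ≤ #V)
    (hR : 100 * (j+3)^3 * C^2 * m ≤ #V)
    (hlarge : 3 * (j+2)^2 * N^j ≤ (N - 1).choose (j+1))
    (hbig : N.choose (j+3) < #F) :
    #F ≤ N.choose (j+3) + max (N.choose (j+2) - (N - (j+2)).choose (j+2) + (m-1))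
      (m * (N - 1).choose (j+1)) := by
  classical
  set n := #V with hnV
  set P := n^(j+1) with hP
  set k := j + 3 with hk
  have hn0 : 0 < n := by omega
  have hP0 : 0 < P := Nat.pow_pos hn0
  have hnP : 0 < n * P := Nat.mul_pos hn0 hP0
  let mi : ℕ → ℕ := fun v => #((V.powersetCard k \ F).filter (fun A => v ∈ A))
  let de : ℕ → ℕ := fun v => #(F.filter (fun A => v ∈ A))
  have hdm : ∀ v ∈ V, mi v + de v = (n-1).choose (j+2) := by
    intro v hv
    rw [← star_card V (j+2) v hv]
    have : (V.powersetCard k).filter (fun A => v ∈ A) =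
        (V.powersetCard k \ F).filter (fun A => v ∈ A) ∪ F.filter (fun A => v ∈ A) := by
      rw [← filter_union, sdiff_union_of_subset hF]
    change _ = #((V.powersetCard k).filter (fun A => v ∈ A))
    rw [this, card_union_of_disjoint]
    exact disjoint_filter_filter sdiff_disjoint
  have hcompl : #(V.powersetCard k \ F) ≤ m * (n * P) := by
    rw [card_sdiff_of_subset hF, card_powersetCard]
    have h1 := choose_up N (j+2) m
    rw [← hn] at h1
    have e : n^(j+2) = n * P := by rw [hP]; ring
    rw [e] at h1
    change n.choose k ≤ N.choose k + _ at h1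
    change n.choose k - _ ≤ _
    omega
  have hsum : ∑ v ∈ V, mi v = k * #(V.powersetCard k \ F) :=
    sum_deg_le V (V.powersetCard k \ F) k sdiff_subset
  set B := V.filter (fun v => n * P < 2 * k * C * mi v) with hB
  set S := V.filter (fun v => 4 * C * de v < n * P) with hS
  have hBV : B ⊆ V := filter_subset _ _
  have hSV : S ⊆ V := filter_subset _ _
  have hBc : #B ≤ 2 * k^2 * C * m := by
    have h1 : #B * (n * P) ≤ ∑ v ∈ B, 2 * k * C * mi v := by
      rw [← smul_eq_mul]
      apply card_nsmul_le_sum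
      intro v hv
      exact (mem_filter.1 hv).2.le
    have h2 : ∑ v ∈ B, 2 * k * C * mi v ≤ ∑ v ∈ V, 2 * k * C * mi v :=
      sum_le_sum_of_subset hBV
    rw [← mul_sum V, hsum] at h2
    have h3 : 2 * k * C * (k * #(V.powersetCard k \ F)) ≤ 2 * k * C * (k * (m * (n * P))) :=
      Nat.mul_le_mul_left _ (Nat.mul_le_mul_left _ hcompl)
    have h4 : #B * (n * P) ≤ (2 * k^2 * C * m) * (n * P) := by
      calc _ ≤ 2 * k * C * (k * (m * (n * P))) := h1.trans (h2.trans h3)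
        _ = _ := by ring
    exact Nat.le_of_mul_le_mul_right h4 hnP
  have hqn : q ≤ n - 1 := by
    have : 12 * q ≤ 4 * k * q := Nat.mul_le_mul_right _ (by omega)
    omega
  have hSB : S ⊆ B := by
    intro v hv
    rw [hS, mem_filter] at hv
    rw [hB, mem_filter]
    refine ⟨hv.1, ?_⟩
    have h1 := hdm v hv.1
    have h2 : q.choose (j+2) ≤ (n-1).choose (j+2) := Nat.choose_le_choose _ hqn
    have h3 : C * q.choose (j+2) ≤ C * (n-1).choose (j+2) := Nat.mul_le_mul_left _ h2
    rw [← h1, Nat.mul_add] at h3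
    have h4 : 2 * (C * mi v) ≤ 2 * k * C * mi v := by
      rw [← Nat.mul_assoc]
      apply Nat.mul_le_mul_right
      nlinarith
    have h5 : 4 * C * de v = 4 * (C * de v) := by ring
    omega
  have hgood : ∀ u ∈ V \ B, (j+1+2) * #(((V.powersetCard (j+1+2)) \ F).filter (fun A => u ∈ A))
      < q.choose (j+1+1) := by
    intro u hu
    change k * mi u < q.choose (j+2)
    rw [mem_sdiff, hB, mem_filter] at hu
    have h1 : 2 * k * C * mi u ≤ n * P := by
      by_contra h
      exact hu.2 ⟨hu.1, by omega⟩
    have h2 : C * (2 * (k * mi u)) ≤ C * q.choose (j+2) := by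
      calc _ = 2 * k * C * mi u := by ring
        _ ≤ _ := h1.trans hCq
    have h3 := Nat.le_of_mul_le_mul_left h2 hC
    have h4 : 0 < q.choose (j+2) := by
      by_contra h
      have : q.choose (j+2) = 0 := by omega
      rw [this] at hCq
      omega
    omega
  have hk3 : 3 ≤ k := by omega
  have hC2 : C ≤ C^2 := by nlinarith
  have hmid : ∀ v ∈ B \ S, (j+1+2) * (2 * #B) * (#V)^(j+1) < #(F.filter (fun A => v ∈ A)) := by
    intro v hv
    change k * (2 * #B) * P < de v
    rw [mem_sdiff] at hv
    have h1 : n * P ≤ 4 * C * de v := by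
      by_contra h
      exact hv.2 (mem_filter.2 ⟨hBV hv.1, by omega⟩)
    have h2 : 4 * C * (k * (2 * #B) * P) ≤ 16 * k^3 * C^2 * m * P := by
      calc _ = (8 * C * k * P) * #B := by ring
        _ ≤ (8 * C * k * P) * (2 * k^2 * C * m) := Nat.mul_le_mul_left _ hBc
        _ = _ := by ring
    have h3 : 16 * k^3 * C^2 * m * P < n * P := by
      apply Nat.mul_lt_mul_of_pos_right _ hP0
      have h4 : 0 < k^3 * C^2 * m := by positivity
      have h5 : 16 * k^3 * C^2 * m = 16 * (k^3 * C^2 * m) := by ring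
      have h6 : 100 * k^3 * C^2 * m = 100 * (k^3 * C^2 * m) := by ring
      omega
    exact Nat.lt_of_mul_lt_mul_left (lt_of_le_of_lt h2 (lt_of_lt_of_le h3 h1))
  have hsize : (j+1+3) * q + (2*(j+1+2)+1) * #B ≤ #V := by
    have h1 : (j+1+3) * q ≤ 2 * k * q := Nat.mul_le_mul_right _ (by omega)
    have h2 : (2*(j+1+2)+1) * #B ≤ (3 * k) * (2 * k^2 * C * m) :=
      Nat.mul_le_mul (by omega) hBc
    have h3 : (3 * k) * (2 * k^2 * C * m) ≤ 6 * (k^3 * C^2 * m) := by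
      calc _ = 6 * (k^3 * C * m) := by ring
        _ ≤ _ := by gcongr
    have h4 : 100 * k^3 * C^2 * m = 100 * (k^3 * C^2 * m) := by ring
    have h5 : 4 * k * q = 2 * (2 * k * q) := by ring
    rw [← hnV]
    omega
  set Q := F.powerset.filter (fun M => IsM M ∧ ∀ A ∈ M, ¬ Disjoint A S) with hQ
  have hQn : Q.Nonempty := ⟨∅, mem_filter.2 ⟨by simp, by simp [IsM], by simp⟩⟩
  obtain ⟨MS, hMSQ, hmax⟩ := exists_max_image Q (fun M => #(S ∩ M.biUnion id)) hQn
  rw [hQ, mem_filter, mem_powerset] at hMSQ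
  obtain ⟨hMSF, hMS, hMSS⟩ := hMSQ
  have hMSc := cover_ge MS S hMS hMSS
  set T := MS.biUnion id with hT
  have hMSc2 : #MS ≤ #S := hMSc.trans (card_le_card inter_subset_left)
  obtain ⟨M, hMF, hM, hMc⟩ := cover (j+1) q V S B F MS hF hSB hBV hgood hmid hsize hMSF hMS hMSc2
  have hMs := hnu M hMF hM
  have hkey : m + #(S ∩ T) ≤ 1 + #S := by
    have h1 : (j+1+2) * #M ≤ k * s := Nat.mul_le_mul_left _ hMs
    rw [← hT, ← hnV] at hMc
    omega
  have hhit : ∀ A ∈ F, ¬ Disjoint A S → ¬ Disjoint A T := by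
    intro A hA hAS hAT
    have h1 : insert A MS ∈ Q := by
      rw [hQ, mem_filter, mem_powerset]
      refine ⟨insert_subset hA hMSF, hMS.insert hAT, ?_⟩
      intro D hD
      rcases mem_insert.1 hD with rfl | hD
      · exact hAS
      · exact hMSS D hD
    have h2 := hmax _ h1
    have h3 : #(S ∩ T) < #(S ∩ (insert A MS).biUnion id) := by
      obtain ⟨x, hxA, hxS⟩ := not_disjoint_iff.1 hAS
      apply card_lt_card
      rw [ssubset_iff_of_subset]
      · refine ⟨x, ?_, ?_⟩
        · rw [biUnion_insert]
          exact mem_inter.2 ⟨hxS, mem_union_left _ hxA⟩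
        · intro h
          exact disjoint_left.1 hAT hxA (mem_inter.1 h).2
      · apply inter_subset_inter_left
        rw [biUnion_insert]
        exact subset_union_right
    omega
  have hSle := card_le_card hSV
  have ht1 : 1 ≤ #(S ∩ T) := by
    have hSne : 0 < #S := by omega
    obtain ⟨x, hx⟩ := card_pos.1 hSne
    obtain ⟨A, hA, hxA⟩ := hnon x (hSV hx)
    obtain ⟨y, -, hy⟩ := not_disjoint_iff.1 (hhit A hA (not_disjoint_iff.2 ⟨x, hxA, hx⟩))
    obtain ⟨D, hD, -⟩ := mem_biUnion.1 hy
    have : 0 < #MS := card_pos.2 ⟨D, hD⟩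
    omega
  by_cases hcase : #S = m
  · apply case_one j m N V S F hF hSV hcase hm hn hnon _ hN2 hlarge
    intro M' h1 h2 h3
    have := hmax M' (mem_filter.2 ⟨mem_powerset.2 h1, h2, h3⟩)
    omega
  · exfalso
    obtain ⟨d, hd⟩ : ∃ d, #S = m + d + 1 := ⟨#S - m - 1, by omega⟩
    have hsplit := split_card V S F k hF hSV
    have hTc : #T = k * #MS := hMS.card_biUnion (fun A hA => (mem_powersetCard.1 (hF (hMSF hA))).2)
    have hTc2 : #T ≤ k * #(S ∩ T) := by rw [hTc]; exact Nat.mul_le_mul_left _ hMSc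
    have hdeg2 : ∀ x ∈ S \ T, de x ≤ k * #(S ∩ T) * P := by
      intro x hx
      rw [mem_sdiff] at hx
      have h1 := star_meets V F (j+1) x T hF hx.2
      refine le_trans (card_le_card ?_) (h1.trans (Nat.mul_le_mul_right _ hTc2))
      intro A hA
      rw [mem_filter] at hA ⊢
      exact ⟨hA.1, hA.2, hhit A hA.1 (not_disjoint_iff.2 ⟨x, hA.2, hx.1⟩)⟩
    have hs1 : 4 * C * ∑ x ∈ S ∩ T, de x ≤ #(S ∩ T) * (n * P) := by
      rw [mul_sum, ← smul_eq_mul (#(S ∩ T))]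
      apply sum_le_card_nsmul
      intro x hx
      exact (mem_filter.1 (mem_inter.1 hx).1).2.le
    have hs2 : ∑ x ∈ S \ T, de x ≤ #S * (k * #(S ∩ T) * P) := by
      refine (sum_le_card_nsmul _ _ _ hdeg2).trans ?_
      rw [smul_eq_mul]
      exact Nat.mul_le_mul_right _ (card_le_card sdiff_subset)
    have hs3 : 4 * C * (#S * (k * #(S ∩ T) * P)) ≤ #(S ∩ T) * (n * P) := by
      have h1 : 4 * C * (#S * k) ≤ n := by
        calc 4 * C * (#S * k) = (4 * C * k) * #S := by ring
          _ ≤ (4 * C * k) * (2 * k^2 * C * m) :=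
            Nat.mul_le_mul_left _ ((card_le_card hSB).trans hBc)
          _ = 8 * (k^3 * C^2 * m) := by ring
          _ ≤ 100 * (k^3 * C^2 * m) := Nat.mul_le_mul_right _ (by norm_num)
          _ = 100 * k^3 * C^2 * m := by ring
          _ ≤ n := hR
      calc _ = (4 * C * (#S * k)) * (#(S ∩ T) * P) := by ring
        _ ≤ n * (#(S ∩ T) * P) := Nat.mul_le_mul_right _ h1
        _ = _ := by ring
    have hse : ∑ x ∈ S, de x = ∑ x ∈ S ∩ T, de x + ∑ x ∈ S \ T, de x :=
      by rw [← sum_union (disjoint_of_subset_left inter_subset_right disjoint_sdiff), union_comm,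
        sdiff_union_inter]
    have htot : 4 * C * ∑ x ∈ S, de x ≤ 2 * (#(S ∩ T) * (n * P)) := by
      rw [hse, Nat.mul_add]
      have := Nat.mul_le_mul_left (4 * C) hs2
      omega
    have htd : #(S ∩ T) ≤ 2 * (d + 1) := by omega
    have h5 : 4 * C * ∑ x ∈ S, de x ≤ 4 * C * ((d+1) * q.choose (j+2)) := by
      calc _ ≤ 2 * (#(S ∩ T) * (n * P)) := htot
        _ ≤ 2 * ((2 * (d+1)) * (C * q.choose (j+2))) := by gcongr
        _ = _ := by ring
    have h6 := Nat.le_of_mul_le_mul_left h5 (by omega)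
    have hSB' := (card_le_card hSB).trans hBc
    have hqS : q ≤ n - #S := by
      have hBS := card_le_card hSB
      have h1 : (j+1+3) * q = q + (j+3) * q := by ring
      have h2 : (2*(j+1+2)+1) * #B = #B + 2*(j+1+2) * #B := by ring
      rw [h1, h2, ← hnV] at hsize
      omega
    have h7 : (d+1) * q.choose (j+2) ≤ (d+1) * (n - #S).choose (j+2) :=
      Nat.mul_le_mul_left _ (Nat.choose_le_choose _ hqS)
    have h8 := choose_lo (n - #S) (j+2) (d+1)
    have e : n - #S + (d+1) = N := by omega
    rw [e] at h8
    change (n - #S).choose k + _ ≤ N.choose k at h8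
    change #F ≤ (n - #S).choose k + ∑ x ∈ S, de x at hsplit
    change N.choose k < #F at hbig
    omega

lemma ins_inj {N x y : ℕ} {a b : Finset ℕ} (hx : N < x) (hy : N < y)
    (ha : a ⊆ Icc 1 N) (hb : b ⊆ Icc 1 N) (h : insert x a = insert y b) : x = y ∧ a = b := by
  have hxa : x ∉ a := fun h' => by have := mem_Icc.1 (ha h'); omega
  have hyb : y ∉ b := fun h' => by have := mem_Icc.1 (hb h'); omega
  have hxb : x ∉ b := fun h' => by have := mem_Icc.1 (hb h'); omega
  have e : x = y := by
    have : x ∈ insert y b := h ▸ mem_insert_self x a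
    rcases mem_insert.1 this with h1 | h1
    · exact h1
    · exact absurd h1 hxb
  subst e
  exact ⟨rfl, by rw [← erase_insert hxa, ← erase_insert hxb, h]⟩

lemma E0_card (j n s N c : ℕ) (hN : N + 2 = (j+3)*s + (j+3)) (hn : n = N + c + 1)
    (hjN : j + 2 ≤ N) :
    N.choose (j+3) + (N.choose (j+2) - (N-(j+2)).choose (j+2)) + c ≤ #(E0 n (j+3) s) := by
  have e1 : (j+3)*s+(j+3)-2 = N := by omega
  have e2 : (j+3)*s+(j+3)-1 = N+1 := by omega
  have e3 : j+3-1 = j+2 := by omega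
  unfold E0
  rw [e1, e2, e3, ← hN, card_union_of_disjoint, card_union_of_disjoint]
  · apply Nat.add_le_add
    apply Nat.add_le_add
    · rw [card_powersetCard]; simp
    · have hm := meets_card (Icc 1 N) (Icc 1 (j+2)) (j+2) (Icc_subset_Icc_right hjN)
      simp only [Nat.card_Icc, Nat.add_sub_cancel] at hm
      have hle : #((powersetCard (j+2) (Icc 1 N)).filter (fun A => ¬ Disjoint A (Icc 1 (j+2)))) ≤
          #((powersetCard (j+3) (Icc 1 n)).filter (fun A => A \ Icc 1 N = {N+1} ∧
            (A ∩ Icc 1 (j+2)).Nonempty)) := by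
        apply card_le_card_of_injOn (fun A => insert (N+1) A)
        · intro A hA
          have hA := mem_filter.1 hA
          have hp := mem_powersetCard.1 hA.1
          have hnot : N+1 ∉ A := fun h' => by have := mem_Icc.1 (hp.1 h'); omega
          refine mem_filter.2 ⟨mem_powersetCard.2 ⟨?_, ?_⟩, ?_, ?_⟩
          · apply insert_subset (mem_Icc.2 (by omega))
            exact hp.1.trans (Icc_subset_Icc_right (by omega))
          · rw [card_insert_of_notMem hnot, hp.2]
          · rw [insert_sdiff_of_notMem _ (by simp), sdiff_eq_empty_iff_subset.2 hp.1]; rfl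
          · obtain ⟨x, h1, h2⟩ := not_disjoint_iff.1 hA.2
            exact ⟨x, mem_inter.2 ⟨mem_insert_of_mem h1, h2⟩⟩
        · intro A hA B hB h
          have hA := (mem_powersetCard.1 (mem_filter.1 hA).1).1
          have hB := (mem_powersetCard.1 (mem_filter.1 hB).1).1
          exact (ins_inj (Nat.lt_succ_self N) (Nat.lt_succ_self N) hA hB h).2
      omega
    · rw [card_image_of_injOn]
      · simp; omega
      · intro x hx y hy h
        have hx := mem_Icc.1 hx
        have hy := mem_Icc.1 hy
        exact (ins_inj (N := N) (by omega) (by omega) (Icc_subset_Icc_right hjN)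
          (Icc_subset_Icc_right hjN) h).1
  · rw [disjoint_left]
    intro A hA hA'
    rw [mem_filter] at hA'
    rw [sdiff_eq_empty_iff_subset.2 (mem_powersetCard.1 hA).1] at hA'
    exact absurd hA'.2.1.symm (singleton_ne_empty _)
  · rw [disjoint_left]
    intro A hA hA'
    obtain ⟨x, hx, rfl⟩ := mem_image.1 hA'
    rw [mem_Icc] at hx
    rw [mem_union, mem_filter, mem_powersetCard] at hA
    rcases hA with hA | hA
    · have := mem_Icc.1 (hA.1 (mem_insert_self _ _)); omega
    · have : x ∈ insert x (Icc 1 (j+2)) \ Icc 1 N :=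
        mem_sdiff.2 ⟨mem_insert_self _ _, by simp; omega⟩
      rw [hA.2.1, mem_singleton] at this
      omega

lemma E1_card (j n s N m : ℕ) (hN : N + 2 = (j+3)*s + (j+3)) (hn : n = N + m)
    (hjN : j + 2 ≤ N) :
    N.choose (j+3) + m * (N-1).choose (j+1) ≤ #(E1 n (j+3) s) := by
  have e1 : (j+3)*s+(j+3)-2 = N := by omega
  have e2 : (j+3)*s+(j+3)-1 = N+1 := by omega
  classical
  unfold E1
  rw [e1, e2, card_union_of_disjoint]
  · apply Nat.add_le_add
    · rw [card_powersetCard]; simp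
    · have hs := star_card (Icc 1 N) (j+1) 1 (mem_Icc.2 (by omega))
      have hc : #(Icc (N+1) n) = m := by simp; omega
      have hc1 : #(Icc 1 N) = N := by simp
      rw [hc1] at hs
      rw [← hs, ← hc, ← card_product]
      apply card_le_card_of_injOn (fun z => insert z.1 z.2)
      · intro z hz
        obtain ⟨h1, h2⟩ := mem_product.1 hz
        have h2 := mem_filter.1 h2
        have hp := mem_powersetCard.1 h2.1
        have h1' := mem_Icc.1 h1
        have hnI : z.1 ∉ Icc 1 N := by simp; omega
        have hnot : z.1 ∉ z.2 := fun h' => hnI (hp.1 h')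
        simp only [mem_coe, mem_filter]
        refine ⟨mem_powersetCard.2 ⟨?_, ?_⟩, mem_insert_of_mem h2.2, z.1, h1, ?_⟩
        · apply insert_subset (mem_Icc.2 (by omega))
          exact hp.1.trans (Icc_subset_Icc_right (by omega))
        · rw [card_insert_of_notMem hnot, hp.2]
        · rw [insert_sdiff_of_notMem _ hnI, sdiff_eq_empty_iff_subset.2 hp.1]; rfl
      · intro z hz w hw h
        obtain ⟨h1, h2⟩ := mem_product.1 hz
        obtain ⟨g1, g2⟩ := mem_product.1 hw
        have h1 := mem_Icc.1 h1
        have g1 := mem_Icc.1 g1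
        have hA := (mem_powersetCard.1 (mem_filter.1 h2).1).1
        have hB := (mem_powersetCard.1 (mem_filter.1 g2).1).1
        have := ins_inj (N := N) (by omega) (by omega) hA hB h
        exact Prod.ext this.1 this.2
  · rw [disjoint_left]
    intro A hA hA'
    simp only [mem_filter] at hA'
    obtain ⟨x, hx, h⟩ := hA'.2.2
    rw [sdiff_eq_empty_iff_subset.2 (mem_powersetCard.1 hA).1] at h
    exact absurd h.symm (singleton_ne_empty _)

lemma matching_le (F M : Finset (Finset ℕ)) (s : ℕ) (h : matchingNumber F ≤ s) (hM : M ⊆ F)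
    (hI : IsM M) : #M ≤ s := by
  refine le_trans ?_ h
  unfold matchingNumber
  apply le_csSup
  · refine ⟨#F, ?_⟩
    rintro x ⟨M', h1, rfl, -⟩
    exact card_le_card h1
  · exact ⟨M, hM, rfl, fun A hA B hB hne => hI A hA B hB hne⟩

lemma const_one (k n : ℕ) (hk : 1 ≤ k) (hn : 8 * (k+1) * (k+1) ≤ n) :
    n^k ≤ ((8*(k+1))^k * k.factorial) * (n / (4*(k+1))).choose k := by
  set q := n / (4*(k+1)) with hq
  have h1 : n < 4*(k+1) * (q+1) := Nat.lt_mul_div_succ n (by omega)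
  have h2 : k + 1 ≤ q := by
    rw [hq, Nat.le_div_iff_mul_le (by omega)]
    nlinarith
  have h3 : n ≤ 8*(k+1) * (q+1-k) := by
    obtain ⟨d, hd⟩ := Nat.exists_eq_add_of_le h2
    have : q + 1 - k = d + 2 := by omega
    rw [this]
    rw [hd] at h1
    nlinarith
  have h4 : (q+1-k)^k ≤ k.factorial * q.choose k := by
    rw [← Nat.descFactorial_eq_factorial_mul_choose]
    exact q.pow_sub_le_descFactorial k
  calc n^k ≤ (8*(k+1) * (q+1-k))^k := Nat.pow_le_pow_left h3 _
    _ = (8*(k+1))^k * (q+1-k)^k := mul_pow _ _ _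
    _ ≤ (8*(k+1))^k * (k.factorial * q.choose k) := Nat.mul_le_mul_left _ h4
    _ = _ := by ring

lemma const_two (j N : ℕ) (hN : 3 * (j+2)^2 * (2^(j+1) * (j+1).factorial) ≤ N) :
    3 * (j+2)^2 * N^j ≤ (N - 1).choose (j+1) := by
  set G := 2^(j+1) * (j+1).factorial with hG
  have hG1 : 1 ≤ G := Nat.succ_le_of_lt (by positivity)
  have hNj : 2 * (j+1) ≤ N := by nlinarith
  have h4 : (N-1+1-(j+1))^(j+1) ≤ (j+1).factorial * (N-1).choose (j+1) := by
    rw [← Nat.descFactorial_eq_factorial_mul_choose]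
    exact (N-1).pow_sub_le_descFactorial (j+1)
  have h5 : N ≤ 2 * (N-1+1-(j+1)) := by omega
  have h6 : N^(j+1) ≤ G * (N-1).choose (j+1) := by
    calc N^(j+1) ≤ (2 * (N-1+1-(j+1)))^(j+1) := Nat.pow_le_pow_left h5 _
      _ = 2^(j+1) * (N-1+1-(j+1))^(j+1) := mul_pow _ _ _
      _ ≤ 2^(j+1) * ((j+1).factorial * (N-1).choose (j+1)) := Nat.mul_le_mul_left _ h4
      _ = _ := by rw [hG]; ring
  have h7 : G * (3 * (j+2)^2 * N^j) ≤ G * (N-1).choose (j+1) := by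
    calc _ = (3 * (j+2)^2 * G) * N^j := by ring
      _ ≤ N * N^j := Nat.mul_le_mul_right _ hN
      _ = N^(j+1) := by ring
      _ ≤ _ := h6
  exact Nat.le_of_mul_le_mul_left h7 hG1

end EM

/-- the main stability theorem for almost perfect matchings. -/
theorem stmt0 (k : ℕ) (hk : 3 ≤ k) :
    ∃ (β : ℝ) (s₀ : ℕ), 0 < β ∧ 0 < s₀ ∧
      ∀ (n s : ℕ), s₀ < s → k * s + k ≤ n → (n : ℝ) ≤ (1 + β) * (k * s) + k - 2 →
        ∀ F ⊆ Finset.powersetCard k (Finset.Icc 1 n),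
          NonTrivial n F → matchingNumber F ≤ s →
            F.card ≤ max (E0 n k s).card (E1 n k s).card := by
  obtain ⟨j, rfl⟩ : ∃ j, k = j + 3 := ⟨k - 3, by omega⟩
  set C : ℕ := (8*(j+2+1))^(j+2) * (j+2).factorial with hC
  set R : ℕ := 100 * (j+3)^3 * C^2 with hR
  have hC1 : 1 ≤ C := Nat.succ_le_of_lt (by positivity)
  have hR1 : 0 < R := by positivity
  refine ⟨1 / (R : ℝ), 8 * (j+3) + 3 * (j+2)^2 * (2^(j+1) * (j+1).factorial) + 1, ?_, by omega, ?_⟩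
  · positivity
  intro n s hs hn1 hn2 F hF hnon hnu
  have hss : s ≤ (j+3) * s := Nat.le_mul_of_pos_left _ (by omega)
  obtain ⟨N, hN⟩ : ∃ N, N + 2 = (j+3)*s + (j+3) := ⟨(j+3)*s + (j+3) - 2, by omega⟩
  obtain ⟨m, hm⟩ : ∃ m, n = N + m := ⟨n - N, by omega⟩
  have hm2 : 2 ≤ m := by omega
  have hjN : j + 2 ≤ N := by omega
  have hRm : R * m ≤ n := by
    have hRr : (0:ℝ) < R := by exact_mod_cast hR1
    have h1 : (m : ℝ) ≤ 1 / (R:ℝ) * ((j+3) * s) := by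
      have hN' : (N : ℝ) + 2 = (j+3) * s + (j+3) := by exact_mod_cast hN
      have hm' : (n : ℝ) = N + m := by exact_mod_cast hm
      push_cast at hn2
      nlinarith
    rw [one_div, ← div_eq_inv_mul, le_div_iff₀ hRr] at h1
    have h2 : m * R ≤ (j+3) * s := by exact_mod_cast h1
    rw [Nat.mul_comm]
    omega
  have hcV : (Finset.Icc 1 n).card = n := by simp
  have h0 := EM.E0_card j n s N (m-1) hN (by omega) hjN
  have h1 := EM.E1_card j n s N m hN hm hjN
  by_cases hbig : N.choose (j+3) < F.card
  · have hcore := EM.core j N m s C (n / (4*(j+3))) (Finset.Icc 1 n) F (by omega) hm2 hN hjN hF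
      hnon (fun M h1 h2 => EM.matching_le F M s hnu h1 h2) hC1
      (by
        rw [hcV]
        have := EM.const_one (j+2) n (by omega) (by
          have h8 : (j+3) * (8 * (j+3)) ≤ (j+3) * s := Nat.mul_le_mul_left _ (by omega)
          have h9 : 8 * (j+2+1) * (j+2+1) = (j+3) * (8 * (j+3)) := by ring
          omega)
        calc n * n^(j+1) = n^(j+2) := by ring
          _ ≤ _ := this)
      (by rw [hcV]; exact Nat.mul_div_le n _)
      (by rw [hcV]; exact hRm)
      (EM.const_two j N (by omega)) hbig
    rw [← Nat.add_max_add_left] at hcore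
    refine hcore.trans (max_le_max ?_ h1)
    omega
  · exact (by omega : F.card ≤ (E1 n (j+3) s).card).trans (le_max_right _ _)
end

section
/- For all integers k ≥ 3 and ℓ ≥ 1 there exists a positive integer s₀ such that the following holds. Let n, s be integers with s > s₀ and n = k(s+1) + ℓ. If F ⊆ binom([n],k) is non-trivial and ν(F) ≤ s, then |F| ≤ |E₀(n,k,s)| if k > ℓ + 3, and |F| ≤ |E₁(n,k,s)| if k ≤ ℓ + 3. -/
/-- number of `k`-sets containing a fixed `T` -/
lemma card_contain (U T : Finset ℕ) (r : ℕ) :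
    ((Finset.powersetCard r U).filter (fun A => T ⊆ A)).card ≤ (U.card - T.card).choose (r - T.card) := by
  classical
  by_cases hT : T ⊆ U
  · rw [← Finset.card_sdiff_of_subset hT, ← Finset.card_powersetCard]
    apply Finset.card_le_card_of_injOn (fun A => A \ T)
    · intro A hA
      simp only [Finset.coe_filter, Finset.mem_powersetCard, Set.mem_ofPred_eq] at hA
      simp only [Finset.mem_coe, Finset.mem_powersetCard]
      refine ⟨Finset.sdiff_subset_sdiff hA.1.1 (le_refl _), ?_⟩
      rw [Finset.card_sdiff_of_subset hA.2, hA.1.2]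
    · intro A hA B hB hAB
      simp only [Finset.coe_filter, Finset.mem_powersetCard, Set.mem_ofPred_eq] at hA hB
      simp only at hAB
      rw [← Finset.sdiff_union_of_subset hA.2, hAB, Finset.sdiff_union_of_subset hB.2]
  · rw [Finset.card_eq_zero.2]
    · exact Nat.zero_le _
    · apply Finset.filter_eq_empty_iff.2
      intro A hA h
      exact hT (h.trans (Finset.mem_powersetCard.1 hA).1)

lemma card_contain1 (U : Finset ℕ) (x r : ℕ) :
    ((Finset.powersetCard r U).filter (fun A => x ∈ A)).card ≤ (U.card - 1).choose (r - 1) := by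
  simpa using card_contain U {x} r

lemma card_contain2 (U : Finset ℕ) (x y r : ℕ) (h : x ≠ y) :
    ((Finset.powersetCard r U).filter (fun A => x ∈ A ∧ y ∈ A)).card ≤ (U.card - 2).choose (r - 2) := by
  simpa [Finset.insert_subset_iff, Finset.card_pair h] using card_contain U {x, y} r

/-- sets containing `x` and hitting `B`, `x ∉ B` -/
lemma card_hit (U B : Finset ℕ) (x r : ℕ) (h : x ∉ B) (𝒜 : Finset (Finset ℕ))
    (hA : ∀ A ∈ 𝒜, A ∈ Finset.powersetCard r U ∧ x ∈ A ∧ ¬ Disjoint A B) :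
    𝒜.card ≤ B.card * (U.card - 2).choose (r - 2) := by
  classical
  have : 𝒜 ⊆ B.biUnion (fun y => (Finset.powersetCard r U).filter (fun A => x ∈ A ∧ y ∈ A)) := by
    intro A hAA
    obtain ⟨h1, h2, h3⟩ := hA A hAA
    obtain ⟨y, hy1, hy2⟩ := Finset.not_disjoint_iff.1 h3
    exact Finset.mem_biUnion.2 ⟨y, hy2, Finset.mem_filter.2 ⟨h1, h2, hy1⟩⟩
  refine (Finset.card_le_card this).trans ?_
  apply Finset.card_biUnion_le_card_mul
  intro y hy
  exact card_contain2 U x y r (by rintro rfl; exact h hy)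

/-- transposition of the grid spanned by rows `c 0, ..., c (k-1)` -/
lemma exists_transpose {m k : ℕ} (c : Fin k ↪ Fin m) :
    ∃ τ : Equiv.Perm (Fin m × Fin k), (∀ a b, τ (c a, b) = (c b, a)) ∧
      ∀ i b, (∀ a, c a ≠ i) → τ (i, b) = (i, b) := by
  classical
  let f : Fin m × Fin k → Fin m × Fin k := fun p =>
    if h : ∃ a, c a = p.1 then (c p.2, h.choose) else p
  have f1 : ∀ a b, f (c a, b) = (c b, a) := by
    intro a b
    have h : ∃ a', c a' = (c a, b).1 := ⟨a, rfl⟩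
    have h2 := h.choose_spec
    simp only [f, dif_pos h]
    rw [c.injective h2]
  have f2 : ∀ i b, (∀ a, c a ≠ i) → f (i, b) = (i, b) := by
    intro i b hi
    have h : ¬ ∃ a', c a' = (i, b).1 := by push Not; exact hi
    simp only [f, dif_neg h]
  have f3 : Function.Involutive f := by
    rintro ⟨i, b⟩
    by_cases h : ∃ a, c a = i
    · obtain ⟨a, rfl⟩ := h
      rw [f1, f1]
    · push Not at h
      rw [f2 _ _ h, f2 _ _ h]
  exact ⟨f3.toPerm, f1, f2⟩

lemma perfect_matching (k m : ℕ) (hk : 1 ≤ k) (W : Finset ℕ) (hW : W.card = m * k)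
    (F : Finset (Finset ℕ))
    (hdeg : ∀ v ∈ W, k * (k ^ k * ((Finset.powersetCard k W).filter (fun A => v ∈ A ∧ A ∉ F)).card)
      < (m - 1).descFactorial (k - 1)) :
    ∃ M ⊆ F, M.card = m ∧ (M : Set (Finset ℕ)).PairwiseDisjoint id ∧ ∀ A ∈ M, A ⊆ W := by
  classical
  have e0 : Fin m × Fin k ≃ W := Fintype.equivOfCardEq (by simp [hW])
  let row : (Fin m × Fin k ≃ W) → Fin m → Finset ℕ :=
    fun e i => Finset.univ.image (fun b => (e (i, b) : ℕ))
  let good : (Fin m × Fin k ≃ W) → Finset (Fin m) := fun e => Finset.univ.filter (fun i => row e i ∈ F)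
  obtain ⟨e, -, he⟩ := Finset.exists_max_image (Finset.univ : Finset (Fin m × Fin k ≃ W))
    (fun e => (good e).card) ⟨e0, Finset.mem_univ _⟩
  have hsub : ∀ (e : Fin m × Fin k ≃ W) i, row e i ⊆ W := by
    intro e i x hx
    obtain ⟨b, -, rfl⟩ := Finset.mem_image.1 hx
    exact (e (i, b)).2
  have hdis : ∀ (e : Fin m × Fin k ≃ W) i j, i ≠ j → Disjoint (row e i) (row e j) := by
    intro e i j hij
    rw [Finset.disjoint_left]
    intro x hx hy
    obtain ⟨b, -, rfl⟩ := Finset.mem_image.1 hx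
    obtain ⟨b', -, h⟩ := Finset.mem_image.1 hy
    have := e.injective (Subtype.ext h)
    exact hij (by simpa using (congrArg Prod.fst this).symm)
  have hne : ∀ (e : Fin m × Fin k ≃ W) i, (row e i).Nonempty :=
    fun e i => ⟨_, Finset.mem_image_of_mem _ (Finset.mem_univ (⟨0, hk⟩ : Fin k))⟩
  have hall : ∀ i, row e i ∈ F := by
    by_contra hcon
    push Not at hcon
    obtain ⟨r0, hr0⟩ := hcon
    -- choose a good grid
    obtain ⟨k', rfl⟩ : ∃ k', k = k' + 1 := ⟨k - 1, by omega⟩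
    let ext : (Fin k' ↪ {i : Fin m // i ≠ r0}) → (Fin (k' + 1) ↪ Fin m) := fun c =>
      ⟨Fin.cons r0 (fun j => (c j : Fin m)), by
        rw [Fin.cons_injective_iff]
        refine ⟨?_, fun a b h => c.injective (Subtype.ext h)⟩
        rintro ⟨j, hj⟩
        exact (c j).2 hj⟩
    let col : (Fin k' ↪ {i : Fin m // i ≠ r0}) → Fin (k' + 1) → Finset ℕ := fun c a =>
      Finset.univ.image (fun b => (e (ext c b, a) : ℕ))
    have hcol : ∀ c a, col c a ∈ Finset.powersetCard (k' + 1) W := by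
      intro c a
      rw [Finset.mem_powersetCard]
      constructor
      · intro x hx
        obtain ⟨b, -, rfl⟩ := Finset.mem_image.1 hx
        exact (e _).2
      · rw [Finset.card_image_of_injective]
        · simp
        · intro b b' h
          have := e.injective (Subtype.ext h)
          exact (ext c).injective (congrArg Prod.fst this)
    obtain ⟨c, hc⟩ : ∃ c, ∀ a, col c a ∈ F := by
      by_contra hno
      push Not at hno
      have hcov : (Finset.univ : Finset (Fin k' ↪ {i : Fin m // i ≠ r0})) ⊆
          (Finset.univ : Finset (Fin (k' + 1))).biUnion (fun a => Finset.univ.filter (fun c => col c a ∉ F)) := by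
        intro c _
        obtain ⟨a, ha⟩ := hno c
        simp only [Finset.mem_biUnion, Finset.mem_filter, Finset.mem_univ, true_and]
        exact ⟨a, ha⟩
      have h1 := Finset.card_le_card hcov
      have hm : 1 ≤ m := by have := r0.2; omega
      have hcard : (Finset.univ : Finset (Fin k' ↪ {i : Fin m // i ≠ r0})).card
          = (m - 1).descFactorial k' := by
        rw [Finset.card_univ, Fintype.card_embedding_eq]
        simp [Fintype.card_subtype_compl]
      rw [hcard] at h1
      -- bound for each column
      have h2 : ∀ a : Fin (k' + 1), (Finset.univ.filter (fun c => col c a ∉ F)).card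
          ≤ (k' + 1) ^ (k' + 1) * ((Finset.powersetCard (k' + 1) W).filter
            (fun A => (e (r0, a) : ℕ) ∈ A ∧ A ∉ F)).card := by
        intro a
        have hmaps : (Finset.univ.filter (fun c => col c a ∉ F)).image (fun c => col c a) ⊆
            (Finset.powersetCard (k' + 1) W).filter (fun A => (e (r0, a) : ℕ) ∈ A ∧ A ∉ F) := by
          intro A hA
          obtain ⟨c, hc, rfl⟩ := Finset.mem_image.1 hA
          rw [Finset.mem_filter] at hc ⊢
          refine ⟨hcol c a, ?_, hc.2⟩
          exact Finset.mem_image.2 ⟨0, Finset.mem_univ _, rfl⟩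
        refine (Finset.card_le_mul_card_image (f := fun c => col c a) _ ((k' + 1) ^ (k' + 1)) ?_).trans
          (Nat.mul_le_mul_left _ (Finset.card_le_card hmaps))
        intro A hA
        have hAc : A.card = k' + 1 := by
          have := hmaps hA
          rw [Finset.mem_filter, Finset.mem_powersetCard] at this
          exact this.1.2
        have : (Fintype.piFinset (fun _ : Fin k' => A)).card ≤ (k' + 1) ^ (k' + 1) := by
          rw [Fintype.card_piFinset]
          simp only [Finset.prod_const, hAc, Finset.card_univ, Fintype.card_fin]
          exact Nat.pow_le_pow_right (by omega) (by omega)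
        refine le_trans ?_ this
        apply Finset.card_le_card_of_injOn (fun c j => (e ((c j : Fin m), a) : ℕ))
        · intro c hc
          simp only [Finset.coe_filter, Set.mem_ofPred_eq, Finset.mem_filter] at hc
          simp only [Finset.mem_coe, Fintype.mem_piFinset]
          intro j
          rw [← hc.2]
          exact Finset.mem_image.2 ⟨j.succ, Finset.mem_univ _, by simp [ext]⟩
        · intro c _ c' _ h
          ext j
          have := congrFun h j
          have := e.injective (Subtype.ext this)
          exact congrArg Fin.val (congrArg Prod.fst this)
      have hpos : 0 < (m - 1).descFactorial k' := by
        have := hdeg _ (e (r0, 0)).2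
        simp only [Nat.add_sub_cancel] at this
        omega
      have h3 := h1.trans Finset.card_biUnion_le
      have h4 : (k' + 1) * ∑ a : Fin (k' + 1), (Finset.univ.filter (fun c => col c a ∉ F)).card
          < (k' + 1) * (m - 1).descFactorial k' := by
        rw [Finset.mul_sum]
        calc _ < ∑ a : Fin (k' + 1), (m - 1).descFactorial k' := by
              apply Finset.sum_lt_sum_of_nonempty ⟨0, Finset.mem_univ _⟩
              intro a _
              have := hdeg _ (e (r0, a)).2
              simp only [Nat.add_sub_cancel] at this
              exact lt_of_le_of_lt (Nat.mul_le_mul_left _ (h2 a)) this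
          _ = _ := by simp
      have := Nat.lt_of_mul_lt_mul_left h4
      omega
    -- improve
    obtain ⟨τ, hτ1, hτ2⟩ := exists_transpose (ext c)
    let e' := τ.trans e
    have hrow1 : ∀ a, row e' (ext c a) = col c a := by
      intro a
      simp only [row, col, e', Equiv.trans_apply, hτ1]
    have hrow2 : ∀ i, (∀ a, ext c a ≠ i) → row e' i = row e i := by
      intro i hi
      simp only [row, e', Equiv.trans_apply, hτ2 i _ hi]
    have hlt : good e ⊂ good e' := by
      rw [Finset.ssubset_iff_of_subset]
      · refine ⟨r0, ?_, ?_⟩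
        · have : r0 = ext c 0 := rfl
          simp only [good, Finset.mem_filter, Finset.mem_univ, true_and]
          rw [this, hrow1]
          exact hc 0
        · simp [good, hr0]
      · intro i hi
        simp only [good, Finset.mem_filter, Finset.mem_univ, true_and] at hi ⊢
        by_cases h : ∃ a, ext c a = i
        · obtain ⟨a, rfl⟩ := h
          rw [hrow1]; exact hc a
        · push Not at h
          rw [hrow2 i h]; exact hi
    have := Finset.card_lt_card hlt
    have := he e' (Finset.mem_univ _)
    omega
  refine ⟨Finset.univ.image (row e), ?_, ?_, ?_, ?_⟩
  · intro A hA
    obtain ⟨i, -, rfl⟩ := Finset.mem_image.1 hA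
    exact hall i
  · rw [Finset.card_image_of_injective]
    · simp
    · intro i j hij
      by_contra hne'
      have := hdis e i j hne'
      rw [hij, disjoint_self] at this
      exact (hne e j).ne_empty this
  · intro A hA B hB hAB
    simp only [Finset.coe_image, Finset.coe_univ, Set.image_univ, Set.mem_range] at hA hB
    obtain ⟨i, rfl⟩ := hA
    obtain ⟨j, rfl⟩ := hB
    exact hdis e i j (by rintro rfl; exact hAB rfl)
  · intro A hA
    obtain ⟨i, -, rfl⟩ := Finset.mem_image.1 hA
    exact hsub e i

lemma choose_shift_le (a j r : ℕ) : (a + j).choose (r + 1) ≤ a.choose (r + 1) + j * (a + j - 1).choose r := by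
  induction j with
  | zero => simp
  | succ j ih =>
    have h1 : (a + (j + 1)).choose (r + 1) = (a + j).choose r + (a + j).choose (r + 1) := by
      rw [← add_assoc, Nat.choose_succ_succ]
    have h2 : (a + j - 1).choose r ≤ (a + j).choose r := Nat.choose_le_choose _ (by omega)
    have h3 : a + (j + 1) - 1 = a + j := by omega
    rw [h1, h3]
    nlinarith [Nat.mul_le_mul_left j h2]

lemma le_choose_shift (a j r : ℕ) : a.choose (r + 1) + j * a.choose r ≤ (a + j).choose (r + 1) := by
  induction j with
  | zero => simp
  | succ j ih =>
    have h1 : (a + (j + 1)).choose (r + 1) = (a + j).choose r + (a + j).choose (r + 1) := by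
      rw [← add_assoc, Nat.choose_succ_succ]
    have h2 : a.choose r ≤ (a + j).choose r := Nat.choose_le_choose _ (by omega)
    rw [h1]
    nlinarith

lemma asymp (K c r : ℕ) : ∃ m₀, ∀ m, m₀ ≤ m → K * (m + c) ^ r ≤ m.choose (r + 1) := by
  refine ⟨K * (2 ^ (r + 1) * (r + 1).factorial) + 2 * r + c, ?_⟩
  intro m hm
  have h1 : (m + 1 - (r + 1)) ^ (r + 1) ≤ m.descFactorial (r + 1) := Nat.pow_sub_le_descFactorial m (r + 1)
  rw [Nat.descFactorial_eq_factorial_mul_choose] at h1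
  have h2 : (m + c) ^ (r + 1) ≤ 2 ^ (r + 1) * (m + 1 - (r + 1)) ^ (r + 1) := by
    rw [← mul_pow]
    exact Nat.pow_le_pow_left (by omega) _
  have h3 : K * (2 ^ (r + 1) * (r + 1).factorial) * (m + c) ^ r ≤ (m + c) ^ (r + 1) := by
    have h5 : K * (2 ^ (r + 1) * (r + 1).factorial) ≤ m + c := by omega
    calc _ ≤ (m + c) * (m + c) ^ r := Nat.mul_le_mul_right _ h5
      _ = _ := by ring
  have h4 : (2 ^ (r + 1) * (r + 1).factorial) * (K * (m + c) ^ r)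
      ≤ (2 ^ (r + 1) * (r + 1).factorial) * m.choose (r + 1) := by
    calc _ = K * (2 ^ (r + 1) * (r + 1).factorial) * (m + c) ^ r := by ring
      _ ≤ _ := h3
      _ ≤ _ := h2
      _ ≤ 2 ^ (r + 1) * ((r + 1).factorial * m.choose (r + 1)) := Nat.mul_le_mul_left _ h1
      _ = _ := by ring
  exact Nat.le_of_mul_le_mul_left h4 (by positivity)

/-- the cross-intersecting families -/
lemma cross_structure (r : ℕ) (U S : Finset ℕ) (hS : 3 ≤ S.card)
    (𝒜 : ℕ → Finset (Finset ℕ)) (hU : ∀ v ∈ S, 𝒜 v ⊆ Finset.powersetCard r U)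
    (hne : ∀ v ∈ S, (𝒜 v).Nonempty)
    (hcross : ∀ v ∈ S, ∀ w ∈ S, v ≠ w → ∀ A ∈ 𝒜 v, ∀ B ∈ 𝒜 w, ¬ Disjoint A B) :
    (r ≤ U.card ∧ ∑ v ∈ S, (𝒜 v).card + (U.card - r).choose r ≤ U.card.choose r + (S.card - 1)) ∨
    ∑ v ∈ S, (𝒜 v).card ≤ (r - 1) * (U.card - 1).choose (r - 1)
      + (r * r + S.card) * (U.card - 2).choose (r - 2) ∨
    ∑ v ∈ S, (𝒜 v).card ≤ S.card * (U.card - 1).choose (r - 1) ∨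
    ∑ v ∈ S, (𝒜 v).card ≤ (S.card - 1) * (U.card - 1).choose (r - 1)
      + S.card * (r * r) * (U.card - 2).choose (r - 2) := by
  classical
  set D := (U.card - 1).choose (r - 1) with hD
  set C := (U.card - 2).choose (r - 2) with hC
  let H : ℕ → Finset ℕ := fun v => U.filter (fun x => r * C < ((𝒜 v).filter (fun A => x ∈ A)).card)
  have cardr : ∀ v ∈ S, ∀ A ∈ 𝒜 v, A.card = r := fun v hv A hA => (Finset.mem_powersetCard.1 (hU v hv hA)).2
  have subU : ∀ v ∈ S, ∀ A ∈ 𝒜 v, A ⊆ U := fun v hv A hA => (Finset.mem_powersetCard.1 (hU v hv hA)).1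
  -- other elements of S
  have other : ∀ v ∈ S, ∃ w ∈ S, w ≠ v := by
    intro v hv
    exact Finset.exists_mem_ne (by omega) v
  have other2 : ∀ v w, ∃ u ∈ S, u ≠ v ∧ u ≠ w := by
    intro v w
    have h1 : ({v, w} : Finset ℕ).card < S.card := lt_of_le_of_lt Finset.card_le_two (by omega)
    obtain ⟨u, hu, hu'⟩ := Finset.exists_mem_notMem_of_card_lt_card h1
    simp only [Finset.mem_insert, Finset.mem_singleton, not_or] at hu'
    exact ⟨u, hu, hu'⟩
  have heavy : ∀ v ∈ S, ∀ w ∈ S, w ≠ v → ∀ B ∈ 𝒜 w, H v ⊆ B := by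
    intro v hv w hw hwv B hB x hx
    by_contra hxB
    have h1 := (Finset.mem_filter.1 hx).2
    have h2 := card_hit U B x r hxB ((𝒜 v).filter (fun A => x ∈ A)) (by
      intro A hA
      rw [Finset.mem_filter] at hA
      exact ⟨hU v hv hA.1, hA.2, hcross v hv w hw hwv.symm A hA.1 B hB⟩)
    rw [cardr w hw B hB, ← hC] at h2
    omega
  have hHr : ∀ v ∈ S, (H v).card ≤ r := by
    intro v hv
    obtain ⟨w, hw, hwv⟩ := other v hv
    obtain ⟨B, hB⟩ := hne w hw
    rw [← cardr w hw B hB]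
    exact Finset.card_le_card (heavy v hv w hw hwv B hB)
  have size : ∀ v ∈ S, (𝒜 v).card ≤ (H v).card * D + r * r * C := by
    intro v hv
    obtain ⟨w, hw, hwv⟩ := other v hv
    obtain ⟨B, hB⟩ := hne w hw
    have hsub : 𝒜 v ⊆ (H v).biUnion (fun x => (𝒜 v).filter (fun A => x ∈ A)) ∪
        (B \ H v).biUnion (fun x => (𝒜 v).filter (fun A => x ∈ A)) := by
      intro A hA
      obtain ⟨x, hxA, hxB⟩ := Finset.not_disjoint_iff.1 (hcross v hv w hw hwv.symm A hA B hB)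
      rw [Finset.mem_union]
      by_cases hxH : x ∈ H v
      · left
        exact Finset.mem_biUnion.2 ⟨x, hxH, Finset.mem_filter.2 ⟨hA, hxA⟩⟩
      · right
        exact Finset.mem_biUnion.2 ⟨x, Finset.mem_sdiff.2 ⟨hxB, hxH⟩, Finset.mem_filter.2 ⟨hA, hxA⟩⟩
    refine (Finset.card_le_card hsub).trans ((Finset.card_union_le _ _).trans (Nat.add_le_add ?_ ?_))
    · apply Finset.card_biUnion_le_card_mul
      intro x _
      exact (Finset.card_le_card (Finset.filter_subset_filter _ (hU v hv))).trans (card_contain1 U x r)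
    · have : (B \ H v).card * (r * C) ≤ r * r * C := by
        rw [mul_assoc]
        refine Nat.mul_le_mul_right _ ?_
        rw [← cardr w hw B hB]
        exact Finset.card_le_card Finset.sdiff_subset
      refine le_trans (Finset.card_biUnion_le_card_mul _ _ (r * C) ?_) this
      intro x hx
      rw [Finset.mem_sdiff] at hx
      by_contra hcon
      push Not at hcon
      exact hx.2 (Finset.mem_filter.2 ⟨subU w hw B hB hx.1, hcon⟩)
  have two : ∀ u ∈ S, ∀ x y, x ≠ y → (∀ A ∈ 𝒜 u, x ∈ A ∧ y ∈ A) → (𝒜 u).card ≤ C := by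
    intro u hu x y hxy h
    refine le_trans (Finset.card_le_card ?_) (card_contain2 U x y r hxy)
    intro A hA
    exact Finset.mem_filter.2 ⟨hU u hu hA, h A hA⟩
  by_cases hA : ∃ v ∈ S, 2 ≤ (H v).card
  · obtain ⟨v, hv, hv2⟩ := hA
    rw [← Finset.add_sum_erase S _ hv]
    have hce : (S.erase v).card = S.card - 1 := Finset.card_erase_of_mem hv
    rcases Nat.lt_or_ge (H v).card r with hlt | hge
    · right; left
      obtain ⟨x, hx, y, hy, hxy⟩ := Finset.one_lt_card.1 (show 1 < (H v).card by omega)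
      have h1 : ∑ w ∈ S.erase v, (𝒜 w).card ≤ (S.erase v).card * C := by
        rw [← smul_eq_mul]
        apply Finset.sum_le_card_nsmul
        intro w hw
        rw [Finset.mem_erase] at hw
        exact two w hw.2 x y hxy (fun A hA =>
          ⟨heavy v hv w hw.2 hw.1 A hA hx, heavy v hv w hw.2 hw.1 A hA hy⟩)
      have h2 := size v hv
      have h3 : (H v).card * D ≤ (r - 1) * D := Nat.mul_le_mul_right _ (by omega)
      have h4 : (S.erase v).card * C ≤ S.card * C := Nat.mul_le_mul_right _ (by omega)
      rw [add_mul]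
      omega
    · left
      have heq : ∀ w ∈ S, w ≠ v → ∀ B ∈ 𝒜 w, B = H v := by
        intro w hw hwv B hB
        refine (Finset.eq_of_subset_of_card_le (heavy v hv w hw hwv B hB) ?_).symm
        rw [cardr w hw B hB]; exact hge
      have h1 : ∑ w ∈ S.erase v, (𝒜 w).card ≤ (S.erase v).card * 1 := by
        rw [← smul_eq_mul]
        apply Finset.sum_le_card_nsmul
        intro w hw
        rw [Finset.mem_erase] at hw
        rw [Finset.card_le_one]
        intro A hA B hB
        rw [heq w hw.2 hw.1 A hA, heq w hw.2 hw.1 B hB]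
      obtain ⟨w, hw, hwv⟩ := other v hv
      obtain ⟨B, hB⟩ := hne w hw
      have hBU := subU w hw B hB
      have hBr := cardr w hw B hB
      have hrU : r ≤ U.card := by rw [← hBr]; exact Finset.card_le_card hBU
      have h2 : (𝒜 v).card + (U.card - r).choose r ≤ U.card.choose r := by
        have e1 : (U.card - r).choose r = (Finset.powersetCard r (U \ B)).card := by
          rw [Finset.card_powersetCard, Finset.card_sdiff_of_subset hBU, hBr]
        have e2 : U.card.choose r = (Finset.powersetCard r U).card := by
          rw [Finset.card_powersetCard]
        rw [e1, e2, ← Finset.card_union_of_disjoint]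
        · refine Finset.card_le_card (Finset.union_subset (hU v hv) ?_)
          exact Finset.powersetCard_mono Finset.sdiff_subset
        · rw [Finset.disjoint_left]
          intro A hA hA'
          refine hcross v hv w hw hwv.symm A hA B hB ?_
          exact Finset.disjoint_of_subset_left (Finset.mem_powersetCard.1 hA').1 Finset.sdiff_disjoint
      refine ⟨hrU, ?_⟩
      omega
  · push Not at hA
    by_cases hB : ∃ v ∈ S, (H v).card = 0
    · right; right; right
      obtain ⟨v, hv, hv0⟩ := hB
      have hs : ∑ w ∈ S, (𝒜 w).card ≤ ∑ w ∈ S, ((H w).card * D + r * r * C) :=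
        Finset.sum_le_sum size
      refine hs.trans ?_
      rw [Finset.sum_add_distrib, ← Finset.sum_mul, Finset.sum_const, smul_eq_mul, ← mul_assoc]
      refine Nat.add_le_add_right (Nat.mul_le_mul_right _ ?_) _
      rw [← Finset.add_sum_erase S _ hv, hv0, zero_add, ← Finset.card_erase_of_mem hv,
        Finset.card_eq_sum_ones]
      apply Finset.sum_le_sum
      intro w hw
      have := hA w (Finset.mem_of_mem_erase hw)
      omega
    · right; right; left
      push Not at hB
      obtain ⟨v, hv⟩ : S.Nonempty := Finset.card_pos.1 (by omega)
      obtain ⟨x, hx⟩ : (H v).Nonempty := Finset.card_pos.1 (Nat.pos_of_ne_zero (hB v hv))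
      have hxall : ∀ w ∈ S, x ∈ H w := by
        intro w hw
        by_cases hwv : w = v
        · subst hwv; exact hx
        obtain ⟨y, hy⟩ : (H w).Nonempty := Finset.card_pos.1 (Nat.pos_of_ne_zero (hB w hw))
        by_cases hxy : x = y
        · rw [hxy]; exact hy
        exfalso
        obtain ⟨u, hu, huv, huw⟩ := other2 v w
        have h1 := two u hu x y hxy (fun A hA => ⟨heavy v hv u hu huv A hA hx, heavy w hw u hu huw A hA hy⟩)
        obtain ⟨z, hz⟩ : (H u).Nonempty := Finset.card_pos.1 (Nat.pos_of_ne_zero (hB u hu))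
        have h2 := (Finset.mem_filter.1 hz).2
        have h3 := Finset.card_le_card (Finset.filter_subset (fun A => z ∈ A) (𝒜 u))
        have hr : 1 ≤ r := by
          obtain ⟨A, hA'⟩ := hne u hu
          rw [← cardr u hu A hA']
          exact Finset.card_pos.2 ⟨x, heavy v hv u hu huv A hA' hx⟩
        have h4 : 1 * C ≤ r * C := Nat.mul_le_mul_right _ hr
        omega
      rw [← smul_eq_mul]
      apply Finset.sum_le_card_nsmul
      intro w hw
      obtain ⟨u, hu, huw⟩ := other w hw
      refine le_trans (Finset.card_le_card ?_) (card_contain1 U x r)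
      intro A hA'
      exact Finset.mem_filter.2 ⟨hU w hw hA', heavy u hu w hw huw.symm A hA' (hxall u hu)⟩


lemma card_le_matchingNumber (F M : Finset (Finset ℕ)) (hM : M ⊆ F)
    (hd : (M : Set (Finset ℕ)).PairwiseDisjoint id) : M.card ≤ matchingNumber F := by
  apply le_csSup
  · refine ⟨F.card, ?_⟩
    rintro m ⟨M', hM', rfl, -⟩
    exact Finset.card_le_card hM'
  · exact ⟨M, hM, rfl, hd⟩

lemma card_biUnion_matching (k n : ℕ) (F M : Finset (Finset ℕ))
    (hF : F ⊆ Finset.powersetCard k (Finset.Icc 1 n)) (hM : M ⊆ F)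
    (hd : (M : Set (Finset ℕ)).PairwiseDisjoint id) :
    (M.biUnion id).card = M.card * k := by
  rw [Finset.card_biUnion hd, Finset.sum_const_nat]
  intro A hA
  exact (Finset.mem_powersetCard.1 (hF (hM hA))).2

/-- A matching covering all but `l` of the bad vertices extends. -/
lemma extend_matching (k l n s b : ℕ) (hk : 1 ≤ k) (hn : n = k * (s + 1) + l)
    (F : Finset (Finset ℕ)) (hF : F ⊆ Finset.powersetCard k (Finset.Icc 1 n))
    (B : Finset ℕ) (hB : B ⊆ Finset.Icc 1 n)
    (hdeg : ∀ v ∈ Finset.Icc 1 n, v ∉ B → k * (k ^ k * ((Finset.powersetCard k (Finset.Icc 1 n)).filter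
        (fun A => v ∈ A ∧ A ∉ F)).card) < (s - b).descFactorial (k - 1))
    (M : Finset (Finset ℕ)) (hM : M ⊆ F) (hMb : M.card ≤ b) (hbs : b ≤ s)
    (hd : (M : Set (Finset ℕ)).PairwiseDisjoint id)
    (hcov : (B \ M.biUnion id).card ≤ l) : s + 1 ≤ matchingNumber F := by
  classical
  set X := M.biUnion id with hX
  have hXV : X ⊆ Finset.Icc 1 n := by
    intro x hx
    obtain ⟨A, hA, hxA⟩ := Finset.mem_biUnion.1 hx
    exact (Finset.mem_powersetCard.1 (hF (hM hA))).1 hxA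
  have hXc : X.card = M.card * k := card_biUnion_matching k n F M hF hM hd
  have hVX : (Finset.Icc 1 n \ X).card = n - M.card * k := by
    rw [Finset.card_sdiff_of_subset hXV, hXc]; simp
  have hMk : M.card * k ≤ s * k := Nat.mul_le_mul_right _ (hMb.trans hbs)
  obtain ⟨R, hR1, hR2, hR3⟩ := Finset.exists_subsuperset_card_eq
    (Finset.sdiff_subset_sdiff hB (le_refl X)) hcov (by
      rw [hVX, hn]
      have : k * (s + 1) = s * k + k := by ring
      omega)
  set W := (Finset.Icc 1 n \ X) \ R with hWdef
  have hWc : W.card = (s + 1 - M.card) * k := by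
    rw [hWdef, Finset.card_sdiff_of_subset hR2, hVX, hR3, hn, Nat.sub_mul]
    have : k * (s + 1) = (s + 1) * k := by ring
    have : (s + 1) * k = s * k + k := by ring
    omega
  have hWV : W ⊆ Finset.Icc 1 n := Finset.sdiff_subset.trans Finset.sdiff_subset
  obtain ⟨M', hM'F, hM'c, hM'd, hM'W⟩ := perfect_matching k (s + 1 - M.card) hk W hWc F (by
    intro v hv
    have hvB : v ∉ B := by
      intro hvB
      have h1 := Finset.mem_sdiff.1 hv
      have h2 := Finset.mem_sdiff.1 h1.1
      exact h1.2 (hR1 (Finset.mem_sdiff.2 ⟨hvB, h2.2⟩))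
    have h1 := hdeg v (hWV hv) hvB
    have h2 : (s - b).descFactorial (k - 1) ≤ (s + 1 - M.card - 1).descFactorial (k - 1) :=
      Nat.descFactorial_le _ (by omega)
    refine lt_of_lt_of_le (lt_of_le_of_lt ?_ h1) h2
    refine Nat.mul_le_mul_left _ (Nat.mul_le_mul_left _ (Finset.card_le_card ?_))
    exact Finset.filter_subset_filter _ (Finset.powersetCard_mono hWV))
  have hcross : ∀ A ∈ M, ∀ A' ∈ M', Disjoint A A' := by
    intro A hA A' hA'
    rw [Finset.disjoint_left]
    intro x hx hx'
    have h1 := Finset.mem_sdiff.1 (hM'W A' hA' hx')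
    have h2 := Finset.mem_sdiff.1 h1.1
    exact h2.2 (Finset.mem_biUnion.2 ⟨A, hA, hx⟩)
  have hdisj : Disjoint M M' := by
    rw [Finset.disjoint_left]
    intro A hA hA'
    have h1 := hcross A hA A hA'
    rw [disjoint_self] at h1
    have h2 := (Finset.mem_powersetCard.1 (hF (hM hA))).2
    rw [h1] at h2
    simp at h2
    omega
  have := card_le_matchingNumber F (M ∪ M') (Finset.union_subset hM hM'F) (by
    rw [Finset.coe_union]
    refine hd.union hM'd ?_
    intro A hA A' hA' _
    exact hcross A hA A' hA')
  rw [Finset.card_union_of_disjoint hdisj, hM'c] at this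
  omega

/-- Greedily cover vertices of large degree. -/
lemma greedy_cover (k n K : ℕ) (hk : 1 ≤ k)
    (F : Finset (Finset ℕ)) (hF : F ⊆ Finset.powersetCard k (Finset.Icc 1 n))
    (M : Finset (Finset ℕ)) (hM : M ⊆ F) (hd : (M : Set (Finset ℕ)).PairwiseDisjoint id)
    (T : Finset ℕ) (hK : (M.card + T.card) * k ≤ K)
    (hT : ∀ v ∈ T, K * (n - 2).choose (k - 2) < (F.filter (fun A => v ∈ A)).card) :
    ∃ M' ⊆ F, M ⊆ M' ∧ (M' : Set (Finset ℕ)).PairwiseDisjoint id ∧ M'.card ≤ M.card + T.card ∧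
      T ⊆ M'.biUnion id := by
  classical
  induction T using Finset.induction_on with
  | empty => exact ⟨M, hM, le_refl _, hd, by simp, by simp⟩
  | insert v T hv ih =>
    rw [Finset.card_insert_of_notMem hv] at hK ⊢
    obtain ⟨M', h1, h2, h3, h4, h5⟩ := ih
      (le_trans (Nat.mul_le_mul_right _ (by omega)) hK)
      (fun w hw => hT w (Finset.mem_insert_of_mem hw))
    by_cases hvM : v ∈ M'.biUnion id
    · exact ⟨M', h1, h2, h3, by omega, Finset.insert_subset hvM h5⟩
    · obtain ⟨A, hA, hvA, hAd⟩ : ∃ A ∈ F, v ∈ A ∧ Disjoint A (M'.biUnion id) := by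
        by_contra hno
        push Not at hno
        have h6 := card_hit (Finset.Icc 1 n) (M'.biUnion id) v k hvM (F.filter (fun A => v ∈ A)) (by
          intro A hA
          rw [Finset.mem_filter] at hA
          exact ⟨hF hA.1, hA.2, hno A hA.1 hA.2⟩)
        have h7 := hT v (Finset.mem_insert_self _ _)
        rw [card_biUnion_matching k n F M' hF h1 h3] at h6
        have h8 : M'.card * k ≤ K := le_trans (Nat.mul_le_mul_right _ (by omega)) hK
        have h9 := Nat.mul_le_mul_right ((n - 2).choose (k - 2)) h8
        simp only [Nat.card_Icc, Nat.add_sub_cancel] at h6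
        omega
      refine ⟨insert A M', Finset.insert_subset hA h1, h2.trans (Finset.subset_insert _ _), ?_, ?_, ?_⟩
      · rw [Finset.coe_insert]
        apply h3.insert
        intro A' hA' _
        exact (Finset.disjoint_biUnion_right _ _ _).1 hAd A' hA'
      · exact (Finset.card_insert_le _ _).trans (by omega)
      · rw [Finset.biUnion_insert]
        refine Finset.insert_subset (Finset.mem_union_left _ hvA) (h5.trans Finset.subset_union_right)

/-- Combination: a matching of at most two edges covering all but `l` of the small vertices. -/
lemma small_cover (k l n s b : ℕ) (hk : 1 ≤ k) (hn : n = k * (s + 1) + l)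
    (F : Finset (Finset ℕ)) (hF : F ⊆ Finset.powersetCard k (Finset.Icc 1 n))
    (B S : Finset ℕ) (hB : B ⊆ Finset.Icc 1 n) (hBb : B.card ≤ b)
    (hdeg : ∀ v ∈ Finset.Icc 1 n, v ∉ B → k * (k ^ k * ((Finset.powersetCard k (Finset.Icc 1 n)).filter
        (fun A => v ∈ A ∧ A ∉ F)).card) < (s - (b + 2)).descFactorial (k - 1))
    (hS : ∀ v ∈ B, v ∉ S → (b + 2) * k * (n - 2).choose (k - 2) < (F.filter (fun A => v ∈ A)).card)
    (hbs : b + 2 ≤ s) (hν : matchingNumber F ≤ s)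
    (M : Finset (Finset ℕ)) (hM : M ⊆ F) (hM2 : M.card ≤ 2)
    (hd : (M : Set (Finset ℕ)).PairwiseDisjoint id) :
    l < (S \ M.biUnion id).card := by
  classical
  by_contra hcon
  push Not at hcon
  have hT : (B \ S).card ≤ b := (Finset.card_le_card Finset.sdiff_subset).trans hBb
  obtain ⟨M', h1, h2, h3, h4, h5⟩ := greedy_cover k n ((b + 2) * k) hk F hF M hM hd (B \ S)
    (Nat.mul_le_mul_right _ (by omega)) (by
      intro v hv
      rw [Finset.mem_sdiff] at hv
      exact hS v hv.1 hv.2)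
  have := extend_matching k l n s (b + 2) hk hn F hF B hB hdeg M' h1 (by omega) hbs h3 (by
    refine le_trans (Finset.card_le_card ?_) hcon
    intro v hv
    rw [Finset.mem_sdiff] at hv ⊢
    refine ⟨?_, fun h => hv.2 (Finset.biUnion_subset_biUnion_of_subset_left _ h2 h)⟩
    by_contra hvS
    exact hv.2 (h5 (Finset.mem_sdiff.2 ⟨hv.1, hvS⟩)))
  omega

lemma cross_bound (p m t Z : ℕ) (hm : p + 2 ≤ m) (ht : 3 ≤ t)
    (hC : (t * ((p + 2) * (p + 2)) + 2 * ((p + 2) * (p + 2)) + t) * (m - 2).choose p ≤ (m - 1).choose (p + 1))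
    (htD : t ≤ (m - 1).choose (p + 1)) (htC : 1 ≤ p → t ≤ (m - 2).choose p)
    (h : (p + 2 ≤ m ∧ Z + (m - (p + 2)).choose (p + 2) ≤ m.choose (p + 2) + (t - 1)) ∨
      Z ≤ (p + 1) * (m - 1).choose (p + 1) + ((p + 2) * (p + 2) + t) * (m - 2).choose p ∨
      Z ≤ t * (m - 1).choose (p + 1) ∨
      Z ≤ (t - 1) * (m - 1).choose (p + 1) + t * ((p + 2) * (p + 2)) * (m - 2).choose p) :
    (t < p + 2 → Z + (m - (p + 2)).choose (p + 2) ≤ m.choose (p + 2) + (t - 1)) ∧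
    (p + 2 ≤ t → Z ≤ t * (m - 1).choose (p + 1)) := by
  obtain ⟨a, rfl⟩ : ∃ a, m = a + (p + 2) := ⟨m - (p + 2), by omega⟩
  have f1 := le_choose_shift a (p + 2) (p + 1)
  have f2 := choose_shift_le a (p + 1) p
  have f3 := choose_shift_le a (p + 2) (p + 1)
  have f4 := choose_shift_le a p (p + 1)
  have g1 : (a + (p + 2)).choose (p + 1 + 1) = (a + p + 1).choose (p + 1) + (a + p + 1).choose (p + 1 + 1) := by
    rw [show a + (p + 2) = (a + p + 1) + 1 by ring, Nat.choose_succ_succ]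
  have g2 : (a + p + 1).choose (p + 1 + 1) = (a + p).choose (p + 1) + (a + p).choose (p + 1 + 1) := by
    rw [Nat.choose_succ_succ]
  have g3 : (a + p + 1).choose (p + 1) = (a + p).choose p + (a + p).choose (p + 1) := by
    rw [Nat.choose_succ_succ]
  have g4 : (a + p - 1).choose (p + 1) ≤ (a + p + 1).choose (p + 1) := Nat.choose_le_choose _ (by omega)
  have e1 : a + (p + 2) - 1 = a + p + 1 := by omega
  have e2 : a + (p + 2) - 2 = a + p := by omega
  have e3 : a + (p + 2) - (p + 2) = a := by omega
  have e4 : a + (p + 1) - 1 = a + p := by omega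
  have e5 : a + (p + 1) = a + p + 1 := by omega
  have e6 : p + 1 + 1 = p + 2 := rfl
  rw [e1, e2, e3] at h
  rw [e1, e2] at hC
  rw [e1] at htD f3 ⊢
  rw [e2] at htC
  rw [e4, e5] at f2
  rw [e3]
  rw [e6] at f1 f3 f4 g1 g2
  generalize (a + (p + 2)).choose (p + 2) = X at *
  generalize (a + p + 1).choose (p + 1) = D at *
  generalize (a + p + 1).choose (p + 2) = X1 at *
  generalize (a + p).choose (p + 2) = X2 at *
  generalize (a + p).choose (p + 1) = D1 at *
  generalize (a + p).choose p = C at *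
  generalize a.choose (p + 2) = Y at *
  generalize a.choose (p + 1) = D0 at *
  generalize (a + p - 1).choose (p + 1) = D2 at *
  obtain ⟨t', rfl⟩ : ∃ t', t = t' + 1 := ⟨t - 1, by omega⟩
  simp only [Nat.add_sub_cancel] at *
  have f4' : X2 ≤ Y + p * D := f4.trans (Nat.add_le_add_left (Nat.mul_le_mul_left _ g4) _)
  have f2' : (p + 2) * D ≤ (p + 2) * (D0 + (p + 1) * C) := Nat.mul_le_mul_left _ f2
  constructor
  · intro htp
    have h1 : (t' + 1) * D ≤ (p + 1) * D := Nat.mul_le_mul_right _ (by omega)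
    rcases h with h | h | h | h
    · exact h.2
    all_goals linarith [Nat.zero_le (p * C), Nat.zero_le (p * p * C), Nat.zero_le C, Nat.zero_le (t' * C), Nat.zero_le (t' * C * p), Nat.zero_le (t' * C * p * p)]
  · intro htp
    have h1 : (p + 2) * D ≤ (t' + 1) * D := Nat.mul_le_mul_right _ (by omega)
    rcases h with h | h | h | h
    · rcases Nat.lt_or_ge (p + 2) (t' + 1) with h2 | h2
      · have h3 : (p + 3) * D ≤ (t' + 1) * D := Nat.mul_le_mul_right _ (by omega)
        linarith
      · have := htC (by omega)
        linarith
    · linarith [Nat.zero_le (p * C), Nat.zero_le (p * p * C), Nat.zero_le C, Nat.zero_le (t' * C), Nat.zero_le (t' * C * p), Nat.zero_le (t' * C * p * p)]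
    · exact h
    · linarith [Nat.zero_le (p * C), Nat.zero_le (p * p * C), Nat.zero_le C, Nat.zero_le (t' * C), Nat.zero_le (t' * C * p), Nat.zero_le (t' * C * p * p)]

lemma E0_card (n k s : ℕ) (hk : 3 ≤ k) (hn : k * s + k ≤ n) :
    (k * s + k - 2).choose k + (k * s + k - 2).choose (k - 1) + (n - (k * s + k - 1)) ≤
      (E0 n k s).card + (k * s + k - 2 - (k - 1)).choose (k - 1) := by
  classical
  obtain ⟨m, hm⟩ : ∃ m, m = k * s + k - 2 := ⟨_, rfl⟩
  have hm1 : k * s + k - 1 = m + 1 := by omega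
  have hm2 : k * s + k = m + 2 := by omega
  have hkm : k - 1 ≤ m + 1 := by have := Nat.zero_le (k * s); omega
  unfold E0
  rw [← hm, hm1, hm2]
  rw [hm2] at hn
  set P1 := Finset.powersetCard k (Finset.Icc 1 m) with hP1
  set P2 := (Finset.powersetCard k (Finset.Icc 1 n)).filter
    (fun A => A \ Finset.Icc 1 m = {m + 1} ∧ (A ∩ Finset.Icc 1 (k - 1)).Nonempty) with hP2
  set P3 := (Finset.Icc (m + 2) n).image (fun x => insert x (Finset.Icc 1 (k - 1))) with hP3
  have hsub1 : ∀ A ∈ P1, ∀ x ∈ A, x ≤ m := by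
    intro A hA x hx
    have := (Finset.mem_powersetCard.1 hA).1 hx
    rw [Finset.mem_Icc] at this; exact this.2
  have hin2 : ∀ A ∈ P2, m + 1 ∈ A ∧ ∀ x ∈ A, x ≤ m + 1 := by
    intro A hA
    have h := (Finset.mem_filter.1 hA).2.1
    have h0 := (Finset.mem_powersetCard.1 (Finset.mem_filter.1 hA).1).1
    constructor
    · have : m + 1 ∈ A \ Finset.Icc 1 m := by rw [h]; simp
      exact (Finset.mem_sdiff.1 this).1
    · intro x hx
      by_contra hc
      have : x ∈ A \ Finset.Icc 1 m := by
        rw [Finset.mem_sdiff, Finset.mem_Icc]; exact ⟨hx, by omega⟩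
      rw [h, Finset.mem_singleton] at this
      omega
  have hin3 : ∀ A ∈ P3, ∃ x ∈ A, m + 2 ≤ x := by
    intro A hA
    obtain ⟨x, hx, rfl⟩ := Finset.mem_image.1 hA
    exact ⟨x, Finset.mem_insert_self _ _, (Finset.mem_Icc.1 hx).1⟩
  have d12 : Disjoint P1 P2 := by
    rw [Finset.disjoint_left]
    intro A h1 h2
    have := hsub1 A h1 _ (hin2 A h2).1
    omega
  have d3 : Disjoint (P1 ∪ P2) P3 := by
    rw [Finset.disjoint_left]
    intro A h1 h2
    obtain ⟨x, hx, hx2⟩ := hin3 A h2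
    rcases Finset.mem_union.1 h1 with h | h
    · have := hsub1 A h x hx; omega
    · have := (hin2 A h).2 x hx; omega
  rw [Finset.card_union_of_disjoint d3, Finset.card_union_of_disjoint d12]
  have c1 : P1.card = m.choose k := by rw [hP1, Finset.card_powersetCard]; simp
  have c3 : P3.card = n - (m + 1) := by
    rw [hP3, Finset.card_image_of_injOn]
    · simp
    · intro x hx y hy hxy
      simp only [Finset.coe_Icc, Set.mem_Icc] at hx hy
      simp only at hxy
      have : x ∈ insert y (Finset.Icc 1 (k - 1)) := by rw [← hxy]; exact Finset.mem_insert_self _ _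
      rw [Finset.mem_insert, Finset.mem_Icc] at this
      omega
  have c2 : m.choose (k - 1) ≤ P2.card + (m - (k - 1)).choose (k - 1) := by
    have h0 : m.choose (k - 1) = (Finset.powersetCard (k - 1) (Finset.Icc 1 m)).card := by
      rw [Finset.card_powersetCard]; simp
    rw [h0, ← Finset.card_filter_add_card_filter_not (fun B => (B ∩ Finset.Icc 1 (k - 1)).Nonempty)]
    apply Nat.add_le_add
    · apply Finset.card_le_card_of_injOn (fun B => insert (m + 1) B)
      · intro B hB
        simp only [Finset.mem_coe, Finset.mem_filter, Finset.mem_powersetCard] at hB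
        obtain ⟨⟨hB1, hB2⟩, hB3⟩ := hB
        have hnot : m + 1 ∉ B := fun h => by
          have := hB1 h
          rw [Finset.mem_Icc] at this; omega
        simp only [Finset.mem_coe, hP2, Finset.mem_filter, Finset.mem_powersetCard]
        refine ⟨⟨?_, ?_⟩, ?_, ?_⟩
        · refine Finset.insert_subset (Finset.mem_Icc.2 ⟨by omega, by omega⟩) (hB1.trans ?_)
          exact Finset.Icc_subset_Icc_right (by omega)
        · rw [Finset.card_insert_of_notMem hnot, hB2]; omega
        · rw [Finset.insert_sdiff_of_notMem _ (by simp), Finset.sdiff_eq_empty_iff_subset.2 hB1]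
          rfl
        · exact hB3.mono (Finset.inter_subset_inter_right (Finset.subset_insert _ _))
      · intro B hB B' hB' h
        simp only [Finset.mem_coe, Finset.mem_filter, Finset.mem_powersetCard] at hB hB'
        have hnot : m + 1 ∉ B := fun h => by
          have := hB.1.1 h
          rw [Finset.mem_Icc] at this; omega
        have hnot' : m + 1 ∉ B' := fun h => by
          have := hB'.1.1 h
          rw [Finset.mem_Icc] at this; omega
        rw [← Finset.erase_insert hnot, ← Finset.erase_insert hnot']
        simp only at h
        rw [h]
    · by_cases hk1 : k - 1 ≤ m
      · have h1 : (m - (k - 1)).choose (k - 1) =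
            (Finset.powersetCard (k - 1) (Finset.Icc 1 m \ Finset.Icc 1 (k - 1))).card := by
          rw [Finset.card_powersetCard, Finset.card_sdiff_of_subset (Finset.Icc_subset_Icc_right hk1)]
          simp
        rw [h1]
        apply Finset.card_le_card
        intro B hB
        rw [Finset.mem_filter, Finset.mem_powersetCard, Finset.not_nonempty_iff_eq_empty] at hB
        rw [Finset.mem_powersetCard]
        refine ⟨?_, hB.1.2⟩
        rw [Finset.subset_sdiff]
        exact ⟨hB.1.1, Finset.disjoint_iff_inter_eq_empty.2 hB.2⟩
      · have : Finset.powersetCard (k - 1) (Finset.Icc 1 m) = ∅ := by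
          apply Finset.powersetCard_eq_empty.2
          simp; omega
        rw [this]; simp
  omega

lemma E1_card (n k s : ℕ) (hk : 3 ≤ k) (hn : k * s + k ≤ n) :
    (k * s + k - 2).choose k + (n - (k * s + k - 2)) * (k * s + k - 2 - 1).choose (k - 2) ≤
      (E1 n k s).card := by
  classical
  obtain ⟨m, hm⟩ : ∃ m, m = k * s + k - 2 := ⟨_, rfl⟩
  have hm1 : k * s + k - 1 = m + 1 := by omega
  have hm2 : k * s + k = m + 2 := by omega
  unfold E1
  rw [← hm, hm1]
  rw [hm2] at hn
  have hmpos : 1 ≤ m := by omega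
  rw [Finset.card_union_of_disjoint]
  · apply Nat.add_le_add
    · rw [Finset.card_powersetCard]; simp
    · have h0 : (n - m) * (m - 1).choose (k - 2) =
        (Finset.Icc (m + 1) n ×ˢ Finset.powersetCard (k - 2) (Finset.Icc 2 m)).card := by
        rw [Finset.card_product, Finset.card_powersetCard]
        simp
      rw [h0]
      apply Finset.card_le_card_of_injOn (fun q => insert q.1 (insert 1 q.2))
      · rintro ⟨x, B⟩ hq
        simp only [Finset.mem_coe, Finset.mem_product, Finset.mem_powersetCard, Finset.mem_Icc] at hq
        obtain ⟨⟨hx1, hx2⟩, hB1, hB2⟩ := hq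
        have h1 : 1 ∉ B := fun h => by have := hB1 h; rw [Finset.mem_Icc] at this; omega
        have hx : x ∉ insert 1 B := fun h => by
          rcases Finset.mem_insert.1 h with h | h
          · omega
          · have := hB1 h; rw [Finset.mem_Icc] at this; omega
        have hBm : insert 1 B ⊆ Finset.Icc 1 m :=
          Finset.insert_subset (Finset.mem_Icc.2 ⟨by omega, by omega⟩)
            (hB1.trans (Finset.Icc_subset_Icc_left (by omega)))
        simp only [Finset.mem_coe, Finset.mem_filter, Finset.mem_powersetCard]
        refine ⟨⟨?_, ?_⟩, ?_, x, Finset.mem_Icc.2 ⟨hx1, hx2⟩, ?_⟩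
        · refine Finset.insert_subset (Finset.mem_Icc.2 ⟨by omega, by omega⟩) (hBm.trans ?_)
          exact Finset.Icc_subset_Icc_right (by omega)
        · rw [Finset.card_insert_of_notMem hx, Finset.card_insert_of_notMem h1, hB2]; omega
        · simp
        · rw [Finset.insert_sdiff_of_notMem _ (by simp; omega), Finset.sdiff_eq_empty_iff_subset.2 hBm]
          rfl
      · rintro ⟨x, B⟩ hq ⟨y, B'⟩ hq' h
        simp only [Finset.mem_coe, Finset.mem_product, Finset.mem_powersetCard, Finset.mem_Icc] at hq hq'
        simp only at h
        have hlow : ∀ z ∈ B, 2 ≤ z ∧ z ≤ m := fun z hz => Finset.mem_Icc.1 (hq.2.1 hz)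
        have hlow' : ∀ z ∈ B', 2 ≤ z ∧ z ≤ m := fun z hz => Finset.mem_Icc.1 (hq'.2.1 hz)
        have hxy : x = y := by
          have : x ∈ insert y (insert 1 B') := by rw [← h]; exact Finset.mem_insert_self _ _
          rw [Finset.mem_insert, Finset.mem_insert] at this
          rcases this with h | h | h
          · exact h
          · omega
          · have := hlow' x h; omega
        subst hxy
        have hBB : B = B' := by
          ext z
          have hz : z ∈ insert x (insert 1 B) ↔ z ∈ insert x (insert 1 B') := by rw [h]
          simp only [Finset.mem_insert] at hz
          constructor
          · intro hzB
            have := hlow z hzB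
            rcases hz.1 (Or.inr (Or.inr hzB)) with h | h | h
            · omega
            · omega
            · exact h
          · intro hzB
            have := hlow' z hzB
            rcases hz.2 (Or.inr (Or.inr hzB)) with h | h | h
            · omega
            · omega
            · exact h
        rw [hBB]
  · rw [Finset.disjoint_left]
    intro A h1 h2
    simp only [Finset.mem_filter] at h2
    obtain ⟨-, -, x, hx, hx2⟩ := h2
    rw [Finset.sdiff_eq_empty_iff_subset.2 (Finset.mem_powersetCard.1 h1).1] at hx2
    exact absurd hx2.symm (Finset.singleton_ne_empty x)


lemma card_split (n k : ℕ) (F : Finset (Finset ℕ)) (hF : F ⊆ Finset.powersetCard k (Finset.Icc 1 n))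
    (S : Finset ℕ) (hS : S ⊆ Finset.Icc 1 n) :
    F.card ≤ (n - S.card).choose k + ∑ v ∈ S, (F.filter (fun A => v ∈ A)).card := by
  classical
  have hsub : F ⊆ Finset.powersetCard k (Finset.Icc 1 n \ S) ∪
      S.biUnion (fun v => F.filter (fun A => v ∈ A)) := by
    intro A hA
    rw [Finset.mem_union]
    by_cases h : Disjoint A S
    · left
      have := Finset.mem_powersetCard.1 (hF hA)
      exact Finset.mem_powersetCard.2 ⟨Finset.subset_sdiff.2 ⟨this.1, h⟩, this.2⟩
    · right
      obtain ⟨v, hv1, hv2⟩ := Finset.not_disjoint_iff.1 h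
      exact Finset.mem_biUnion.2 ⟨v, hv2, Finset.mem_filter.2 ⟨hA, hv1⟩⟩
  refine (Finset.card_le_card hsub).trans ((Finset.card_union_le _ _).trans
    (Nat.add_le_add (le_of_eq ?_) Finset.card_biUnion_le))
  rw [Finset.card_powersetCard, Finset.card_sdiff_of_subset hS]
  simp

/-- few bad vertices -/
lemma bad_card (n k q t m : ℕ) (hk : 1 ≤ k) (hn : n = m + t) (hkn : k ≤ n)
    (F : Finset (Finset ℕ)) (hF : F ⊆ Finset.powersetCard k (Finset.Icc 1 n))
    (hFc : m.choose k ≤ F.card) :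
    ((Finset.Icc 1 n).filter (fun v => (n - 1).choose (k - 1) < q *
      ((Finset.powersetCard k (Finset.Icc 1 n)).filter (fun A => v ∈ A ∧ A ∉ F)).card)).card ≤ q * k * t := by
  classical
  set B := (Finset.Icc 1 n).filter (fun v => (n - 1).choose (k - 1) < q *
      ((Finset.powersetCard k (Finset.Icc 1 n)).filter (fun A => v ∈ A ∧ A ∉ F)).card) with hB
  set D := (n - 1).choose (k - 1) with hD
  have hDpos : 0 < D := Nat.choose_pos (by omega)
  set G := Finset.powersetCard k (Finset.Icc 1 n) \ F with hG
  have hGeq : ∀ v, (Finset.powersetCard k (Finset.Icc 1 n)).filter (fun A => v ∈ A ∧ A ∉ F)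
      = G.filter (fun A => v ∈ A) := by
    intro v
    ext A
    simp only [hG, Finset.mem_filter, Finset.mem_sdiff]
    tauto
  have hGc : G.card ≤ t * D := by
    rw [hG, Finset.card_sdiff_of_subset hF, Finset.card_powersetCard]
    obtain ⟨k', rfl⟩ : ∃ k', k = k' + 1 := ⟨k - 1, by omega⟩
    have := choose_shift_le m t k'
    simp only [Nat.card_Icc, Nat.add_sub_cancel] at *
    rw [hD, hn]
    omega
  have hsum : ∑ v ∈ B, (G.filter (fun A => v ∈ A)).card ≤ k * G.card := by
    have h1 : ∀ v, (G.filter (fun A => v ∈ A)).card = ∑ A ∈ G, if v ∈ A then 1 else 0 := by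
      intro v; rw [Finset.card_filter]
    simp only [h1]
    rw [Finset.sum_comm, mul_comm, ← smul_eq_mul]
    apply Finset.sum_le_card_nsmul
    intro A hA
    rw [← Finset.card_filter]
    rw [hG, Finset.mem_sdiff, Finset.mem_powersetCard] at hA
    rw [← hA.1.2]
    apply Finset.card_le_card
    intro v hv
    exact (Finset.mem_filter.1 hv).2
  have h2 : B.card * D ≤ ∑ v ∈ B, q * (G.filter (fun A => v ∈ A)).card := by
    rw [← smul_eq_mul]
    apply Finset.card_nsmul_le_sum
    intro v hv
    have := (Finset.mem_filter.1 hv).2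
    rw [hGeq] at this
    exact this.le
  rw [← Finset.mul_sum] at h2
  have h3 : B.card * D ≤ (q * k * t) * D := by
    calc _ ≤ _ := h2
      _ ≤ q * (k * G.card) := Nat.mul_le_mul_left _ hsum
      _ ≤ q * (k * (t * D)) := Nat.mul_le_mul_left _ (Nat.mul_le_mul_left _ hGc)
      _ = _ := by ring
  exact Nat.le_of_mul_le_mul_right h3 hDpos

lemma structure_lemma (k l : ℕ) (hk : 3 ≤ k) : ∃ s₁ : ℕ, ∀ n s : ℕ, s₁ < s → n = k * (s + 1) + l →
    ∀ F ⊆ Finset.powersetCard k (Finset.Icc 1 n), NonTrivial n F → matchingNumber F ≤ s →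
      (k * s + k - 2).choose k ≤ F.card →
      ∃ S ⊆ Finset.Icc 1 n, S.card = l + 2 ∧ (∀ A ∈ F, (A ∩ S).card ≤ 1) ∧
        ∀ A ∈ F, ∀ A' ∈ F, Disjoint A A' → ((A ∪ A') ∩ S).card ≤ 1 := by
  classical
  obtain ⟨q, hq⟩ : ∃ q, q = 2 * (k * k ^ k) * (2 * k) ^ (k - 1) := ⟨_, rfl⟩
  obtain ⟨b, hb⟩ : ∃ b, b = q * k * (l + 2) := ⟨_, rfl⟩
  obtain ⟨m₀, hm₀⟩ := asymp ((l + 3) * ((b + 2) * k) + 1) (l + 1) (k - 2)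
  refine ⟨m₀ + 1 + l + 2 * (b + 2 + k) + 2, ?_⟩
  intro n s hs hn F hF hnt hν hFc
  obtain ⟨m, hm⟩ : ∃ m, m = k * s + k - 2 := ⟨_, rfl⟩
  rw [← hm] at hFc
  have hks : s ≤ k * s := Nat.le_mul_of_pos_left _ (by omega)
  have hnm : n = m + (l + 2) := by rw [hn, hm, mul_add]; omega
  set B := (Finset.Icc 1 n).filter (fun v => (n - 1).choose (k - 1) < q *
      ((Finset.powersetCard k (Finset.Icc 1 n)).filter (fun A => v ∈ A ∧ A ∉ F)).card) with hB
  have hBb : B.card ≤ b := by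
    rw [hb]
    exact bad_card n k q (l + 2) m (by omega) hnm (by omega) F hF hFc
  have hdeg : ∀ v ∈ Finset.Icc 1 n, v ∉ B → k * (k ^ k * ((Finset.powersetCard k (Finset.Icc 1 n)).filter
        (fun A => v ∈ A ∧ A ∉ F)).card) < (s - (b + 2)).descFactorial (k - 1) := by
    intro v hv hvB
    have h1 : q * ((Finset.powersetCard k (Finset.Icc 1 n)).filter
        (fun A => v ∈ A ∧ A ∉ F)).card ≤ (n - 1).choose (k - 1) := by
      by_contra hc
      push Not at hc
      exact hvB (Finset.mem_filter.2 ⟨hv, hc⟩)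
    generalize ((Finset.powersetCard k (Finset.Icc 1 n)).filter (fun A => v ∈ A ∧ A ∉ F)).card = g at h1 ⊢
    set X := (s - (b + 2)).descFactorial (k - 1) with hX
    have hXpos : 0 < X := Nat.descFactorial_pos.2 (by omega)
    have h2 : (s - (b + 2) + 1 - (k - 1)) ^ (k - 1) ≤ X := Nat.pow_sub_le_descFactorial _ _
    have h3 : (n - 1).choose (k - 1) ≤ (2 * k) ^ (k - 1) * X := by
      calc _ ≤ (n - 1) ^ (k - 1) := Nat.choose_le_pow _ _
        _ ≤ ((2 * k) * (s - (b + 2) + 1 - (k - 1))) ^ (k - 1) := by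
            apply Nat.pow_le_pow_left
            obtain ⟨c, hc⟩ : ∃ c, s = c + (1 + l + 2 * (b + 2 + k)) := ⟨s - (1 + l + 2 * (b + 2 + k)), by omega⟩
            have h5 : c + (l + b + k + 4) ≤ s - (b + 2) + 1 - (k - 1) := by omega
            have h6 : (2 * k) * (c + (l + b + k + 4)) ≤ (2 * k) * (s - (b + 2) + 1 - (k - 1)) :=
              Nat.mul_le_mul_left _ h5
            have h7 : n ≤ (2 * k) * (c + (l + b + k + 4)) := by
              rw [hn, hc]
              nlinarith [Nat.zero_le (k * c), Nat.zero_le (k * l), Nat.zero_le (k * b), Nat.mul_le_mul_right l (show 1 ≤ k by omega)]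
            omega
        _ = (2 * k) ^ (k - 1) * (s - (b + 2) + 1 - (k - 1)) ^ (k - 1) := mul_pow _ _ _
        _ ≤ _ := Nat.mul_le_mul_left _ h2
    have h4 : (2 * k) ^ (k - 1) * (2 * (k * (k ^ k * g))) ≤ (2 * k) ^ (k - 1) * X := by
      calc _ = q * g := by rw [hq]; ring
        _ ≤ _ := h1.trans h3
    have h5 := Nat.le_of_mul_le_mul_left h4 (by positivity)
    omega
  set S := B.filter (fun v => (F.filter (fun A => v ∈ A)).card ≤ (b + 2) * k * (n - 2).choose (k - 2)) with hS
  have hSV : S ⊆ Finset.Icc 1 n := (Finset.filter_subset _ _).trans (Finset.filter_subset _ _)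
  have key := small_cover k l n s b (by omega) hn F hF B S (Finset.filter_subset _ _) hBb hdeg
    (by
      intro v hvB hvS
      by_contra hc
      push Not at hc
      exact hvS (Finset.mem_filter.2 ⟨hvB, hc⟩)) (by omega) hν
  have key0 : l < S.card := by
    have := key ∅ (by simp) (by simp) (by simp)
    simpa using this
  have key1 : ∀ A ∈ F, l < (S \ A).card := by
    intro A hA
    have := key {A} (by simpa using hA) (by simp) (by simp)
    simpa using this
  have key2 : ∀ A ∈ F, ∀ A' ∈ F, Disjoint A A' → l < (S \ (A ∪ A')).card := by
    intro A hA A' hA' hd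
    have := key {A, A'} (by
      intro x hx
      rcases Finset.mem_insert.1 hx with rfl | hx
      · exact hA
      · rw [Finset.mem_singleton] at hx; rw [hx]; exact hA') Finset.card_le_two (by
        rw [Finset.coe_pair]
        intro x hx y hy hxy
        rcases hx with rfl | hx <;> rcases hy with rfl | hy
        · exact absurd rfl hxy
        · rw [Set.mem_singleton_iff] at hy; subst hy; exact hd
        · rw [Set.mem_singleton_iff] at hx; subst hx; exact hd.symm
        · rw [Set.mem_singleton_iff] at hx hy; exact absurd (hx.trans hy.symm) hxy)
    simpa [Finset.biUnion_insert] using this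
  have hle : S.card ≤ l + 2 := by
    by_contra hc
    push Not at hc
    obtain ⟨S', hS'1, hS'2⟩ := Finset.exists_subset_card_eq (show l + 3 ≤ S.card by omega)
    have h1 := card_split n k F hF S' (hS'1.trans hSV)
    have h2 : ∑ v ∈ S', (F.filter (fun A => v ∈ A)).card ≤ S'.card * ((b + 2) * k * (n - 2).choose (k - 2)) := by
      rw [← smul_eq_mul]
      apply Finset.sum_le_card_nsmul
      intro v hv
      exact (Finset.mem_filter.1 (hS'1 hv)).2
    rw [hS'2] at h1 h2
    have e1 : n - (l + 3) = m - 1 := by omega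
    rw [e1] at h1
    have h3 : m.choose k = (m - 1).choose (k - 2 + 1) + (m - 1).choose k := by
      obtain ⟨m', rfl⟩ : ∃ m', m = m' + 1 := ⟨m - 1, by omega⟩
      obtain ⟨k', rfl⟩ : ∃ k', k = k' + 2 := ⟨k - 2, by omega⟩
      exact Nat.choose_succ_succ _ _
    have h4 := hm₀ (m - 1) (by omega)
    have e2 : m - 1 + (l + 1) = n - 2 := by omega
    rw [e2] at h4
    have h5 : (n - 2).choose (k - 2) ≤ (n - 2) ^ (k - 2) := Nat.choose_le_pow _ _
    have h6 : 0 < (n - 2) ^ (k - 2) := Nat.pow_pos (by omega)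
    have h7 : (l + 3) * ((b + 2) * k * (n - 2).choose (k - 2)) ≤
        (l + 3) * ((b + 2) * k) * (n - 2) ^ (k - 2) := by
      rw [mul_assoc (l + 3)]
      exact Nat.mul_le_mul_left _ (Nat.mul_le_mul_left _ h5)
    rw [add_mul, one_mul] at h4
    omega
  have hSc : S.card = l + 2 := by
    rcases Nat.lt_or_ge S.card (l + 2) with h | h
    · exfalso
      obtain ⟨v, hv⟩ : S.Nonempty := Finset.card_pos.1 (by omega)
      obtain ⟨A, hA, hvA⟩ := hnt v (hSV hv)
      have h1 := key1 A hA
      have h2 : S \ A ⊂ S := by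
        rw [Finset.ssubset_iff_of_subset Finset.sdiff_subset]
        exact ⟨v, hv, by simp [hvA]⟩
      have := Finset.card_lt_card h2
      omega
    · omega
  refine ⟨S, hSV, hSc, ?_, ?_⟩
  · intro A hA
    have h1 := key1 A hA
    have h2 := Finset.card_sdiff_add_card_inter S A
    rw [Finset.inter_comm] at h2
    omega
  · intro A hA A' hA' hd
    have h1 := key2 A hA A' hA' hd
    have h2 := Finset.card_sdiff_add_card_inter S (A ∪ A')
    rw [Finset.inter_comm] at h2
    omega

/-- the corollary confirming Frankl's conjecture for large `s`. -/
theorem stmt1 (k l : ℕ) (hk : 3 ≤ k) (hl : 1 ≤ l) :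
    ∃ s₀ : ℕ, 0 < s₀ ∧
      ∀ (n s : ℕ), s₀ < s → n = k * (s + 1) + l →
        ∀ F ⊆ Finset.powersetCard k (Finset.Icc 1 n),
          NonTrivial n F → matchingNumber F ≤ s →
            (l + 3 < k → F.card ≤ (E0 n k s).card) ∧
            (k ≤ l + 3 → F.card ≤ (E1 n k s).card) := by
  classical
  obtain ⟨s₁, hs₁⟩ := structure_lemma k l hk
  obtain ⟨p, rfl⟩ : ∃ p, k = p + 3 := ⟨k - 3, by omega⟩
  obtain ⟨K, hK⟩ : ∃ K, K = (l + 2) * ((p + 2) * (p + 2)) + 2 * ((p + 2) * (p + 2)) + (l + 2) := ⟨_, rfl⟩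
  obtain ⟨m₁, hm₁⟩ := asymp K 0 p
  obtain ⟨m₂, hm₂⟩ := asymp (l + 2) 0 (p - 1)
  refine ⟨s₁ + m₁ + m₂ + p + 5, by omega, ?_⟩
  intro n s hs hn F hF hnt hν
  have hks : s ≤ (p + 3) * s := Nat.le_mul_of_pos_left _ (by omega)
  have hnm' : (p + 3) * s + (p + 3) ≤ n := by rw [hn, mul_add]; omega
  have c0 := E0_card n (p + 3) s hk hnm'
  have c1 := E1_card n (p + 3) s hk hnm'
  have hFs := hs₁ n s (by omega) hn F hF hnt hν
  obtain ⟨m, hm⟩ : ∃ m, m = (p + 3) * s + (p + 3) - 2 := ⟨_, rfl⟩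
  have e1 : (p + 3) * s + (p + 3) - 1 = m + 1 := by omega
  have hnm : n = m + (l + 2) := by rw [hn, hm, mul_add]; omega
  rw [← hm, e1] at c0
  rw [← hm] at c1 hFs
  simp only [show p + 3 - 1 = p + 2 by omega, show p + 3 - 2 = p + 1 by omega] at c0 c1
  have e2 : n - (m + 1) = l + 1 := by omega
  have e3 : n - m = l + 2 := by omega
  rw [e2] at c0
  rw [e3] at c1
  have hmono : (m - (p + 2)).choose (p + 2) ≤ m.choose (p + 2) := Nat.choose_le_choose _ (by omega)
  rcases Nat.lt_or_ge F.card (m.choose (p + 3)) with hsmall | hbig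
  · exact ⟨fun _ => by omega, fun _ => by
      have := Nat.zero_le ((l + 2) * (m - 1).choose (p + 1)); omega⟩
  obtain ⟨S, hSV, hSc, hS1, hS2⟩ := hFs hbig
  set U := Finset.Icc 1 n \ S with hU
  have hUc : U.card = m := by
    rw [hU, Finset.card_sdiff_of_subset hSV, hSc]; simp; omega
  let 𝒜 : ℕ → Finset (Finset ℕ) := fun v => (F.filter (fun A => v ∈ A)).image (fun A => A.erase v)
  have hAc : ∀ v, (𝒜 v).card = (F.filter (fun A => v ∈ A)).card := by
    intro v
    apply Finset.card_image_of_injOn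
    intro A hA A' hA' h
    simp only [Finset.mem_coe, Finset.mem_filter] at hA hA'
    simp only at h
    rw [← Finset.insert_erase hA.2, h, Finset.insert_erase hA'.2]
  have hone : ∀ A ∈ F, ∀ v ∈ S, v ∈ A → ∀ w ∈ S, w ∈ A → w = v := by
    intro A hA v hv hvA w hw hwA
    exact Finset.card_le_one.1 (hS1 A hA) w (Finset.mem_inter.2 ⟨hwA, hw⟩) v (Finset.mem_inter.2 ⟨hvA, hv⟩)
  have hUA : ∀ v ∈ S, 𝒜 v ⊆ Finset.powersetCard (p + 2) U := by
    intro v hv B hB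
    obtain ⟨A, hA, rfl⟩ := Finset.mem_image.1 hB
    rw [Finset.mem_filter] at hA
    have hA2 := Finset.mem_powersetCard.1 (hF hA.1)
    rw [Finset.mem_powersetCard]
    constructor
    · intro x hx
      rw [Finset.mem_erase] at hx
      rw [hU, Finset.mem_sdiff]
      exact ⟨hA2.1 hx.2, fun hxS => hx.1 (hone A hA.1 v hv hA.2 x hxS hx.2)⟩
    · rw [Finset.card_erase_of_mem hA.2, hA2.2]; omega
  have hcs := cross_structure (p + 2) U S (by omega) 𝒜 hUA
    (by
      intro v hv
      obtain ⟨A, hA, hvA⟩ := hnt v (hSV hv)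
      exact ⟨_, Finset.mem_image_of_mem _ (Finset.mem_filter.2 ⟨hA, hvA⟩)⟩)
    (by
      intro v hv w hw hvw B hB B' hB' hdis
      obtain ⟨A, hA, rfl⟩ := Finset.mem_image.1 hB
      obtain ⟨A', hA', rfl⟩ := Finset.mem_image.1 hB'
      rw [Finset.mem_filter] at hA hA'
      have hd : Disjoint A A' := by
        rw [Finset.disjoint_left] at hdis ⊢
        intro x hx hx'
        have hxv : x ≠ v := by
          rintro rfl
          exact hvw (hone A' hA'.1 w hw hA'.2 x hv hx')
        have hxw : x ≠ w := by
          rintro rfl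
          exact hvw (hone A hA.1 v hv hA.2 x hw hx).symm
        exact hdis (Finset.mem_erase.2 ⟨hxv, hx⟩) (Finset.mem_erase.2 ⟨hxw, hx'⟩)
      exact hvw (Finset.card_le_one.1 (hS2 A hA.1 A' hA'.1 hd) v
        (Finset.mem_inter.2 ⟨Finset.mem_union_left _ hA.2, hv⟩) w
        (Finset.mem_inter.2 ⟨Finset.mem_union_right _ hA'.2, hw⟩)))
  rw [hUc, hSc] at hcs
  simp only [show p + 2 - 1 = p + 1 by omega, show p + 2 - 2 = p by omega] at hcs
  have h4 := hm₁ (m - 1) (by omega)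
  rw [add_zero] at h4
  have h5 : 1 ≤ (m - 1) ^ p := Nat.pow_pos (by omega)
  have hfin := cross_bound p m (l + 2) _ (by omega) (by omega)
    (by
      rw [← hK]
      refine le_trans (Nat.mul_le_mul_left _ ?_) h4
      exact (Nat.choose_le_pow _ _).trans (Nat.pow_le_pow_left (by omega) _))
    (by
      have h6 : l + 2 ≤ K := by omega
      calc l + 2 ≤ K * 1 := by omega
        _ ≤ K * (m - 1) ^ p := Nat.mul_le_mul_left _ h5
        _ ≤ _ := h4)
    (by
      intro hp
      have h6 := hm₂ (m - 2) (by omega)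
      rw [add_zero, Nat.sub_add_cancel hp] at h6
      have h7 : 1 ≤ (m - 2) ^ (p - 1) := Nat.pow_pos (by omega)
      calc l + 2 = (l + 2) * 1 := by omega
        _ ≤ (l + 2) * (m - 2) ^ (p - 1) := Nat.mul_le_mul_left _ h7
        _ ≤ _ := h6)
    hcs
  have hsplit := card_split n (p + 3) F hF S hSV
  simp only [hAc] at hfin
  rw [hSc, show n - (l + 2) = m by omega] at hsplit
  constructor
  · intro hlk
    have := hfin.1 (by omega)
    omega
  · intro hlk
    have := hfin.2 (by omega)
    omega
end
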